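/- arXiv:2203.11982 — 2 statements merged into one kernel-verified Lean document; each statement's English description precedes it below -/
import Mathlib

section
/- Let Λ₁, …, Λ_g and Λ'₁, …, Λ'_{g'} be lattices in ℂ, each with complex multiplication by R and each with g₂ and g₃ algebraic over ℚ. Let M be a g'×g complex matrix such that for every γ ∈ ℂ^g with γᵢ ∈ Λᵢ for all i, the vector M·γ satisfies (M·γ)ⱼ ∈ Λ'ⱼ for all j. Then every entry of M is algebraic over ℚ. -/
open NumberField

/-- The Eisenstein series `g₂` of an additive subgroup of `ℂ`. -/
noncomputable def g₂ (Λ : AddSubgroup ℂ) : ℂ :=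
  60 * ∑' w : {w : ℂ // w ∈ Λ ∧ w ≠ 0}, ((w : ℂ) ^ 4)⁻¹

/-- The Eisenstein series `g₃` of an additive subgroup of `ℂ`. -/
noncomputable def g₃ (Λ : AddSubgroup ℂ) : ℂ :=
  140 * ∑' w : {w : ℂ // w ∈ Λ ∧ w ≠ 0}, ((w : ℂ) ^ 6)⁻¹

/-!
Entry by entry, the claim is that `α` is algebraic as soon as `α L ⊆ L'` for two lattices whose
invariants `g₂`, `g₃` are algebraic. Put `u = 1 / ℘_L` and `v = 1 / ℘_{L'}`. Then `v (α z)` is an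
even elliptic function for `L`, hence a rational function of `u`: `v (α z) Q(u z) = P(u z)`. The
equation `u' ^ 2 = 4 u - g₂ u ^ 3 - g₃ u ^ 4` determines the Taylor series of `u` at its double zero
`0`, so every automorphism `σ` of `ℂ` fixing the four invariants fixes the Taylor series of `u` and
`v`; applying `σ` to the relation gives the same kind of relation for `σ α`, and that one forces
`σ α L ⊆ L'`. If `α` were transcendental, then `σ α` could be any `α / (n + 1)`, so that
`α ω / (n + 1) ∈ L'` for all `n` and `ω ∈ L`, contradicting the discreteness of `L'`.
-/

section Automorphisms

variable {F K : Type*} [Field F] [Field K] [Algebra F K]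

theorem exists_isTranscendenceBasis_mem {α : K} (hα : Transcendental F α) :
    ∃ s : Set K, α ∈ s ∧ IsTranscendenceBasis F ((↑) : s → K) := by
  have hindep : AlgebraicIndepOn F id ({α} : Set K) :=
    algebraicIndependent_unique_type_iff.2 (by simpa using hα)
  obtain ⟨s, hαs, hs⟩ := exists_isTranscendenceBasis_superset hindep
  exact ⟨s, hαs rfl, hs⟩

theorem exists_algEquiv_apply_eq_of_isTranscendenceBasis [IsAlgClosed K] {ι : Type*} {x y : ι → K}
    (hx : IsTranscendenceBasis F x) (hy : IsTranscendenceBasis F y) :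
    ∃ σ : K ≃ₐ[F] K, ∀ i, σ (x i) = y i := by
  have := IsAlgClosed.isAlgClosure_of_transcendence_basis x hx
  have := IsAlgClosed.isAlgClosure_of_transcendence_basis y hy
  let e : Algebra.adjoin F (Set.range x) ≃ₐ[F] Algebra.adjoin F (Set.range y) :=
    hx.1.aevalEquiv.symm.trans hy.1.aevalEquiv
  have he (i : ι) : e ⟨x i, Algebra.subset_adjoin ⟨i, rfl⟩⟩ =
      ⟨y i, Algebra.subset_adjoin ⟨i, rfl⟩⟩ := by
    have hX : hx.1.aevalEquiv (MvPolynomial.X i) = ⟨x i, Algebra.subset_adjoin ⟨i, rfl⟩⟩ :=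
      Subtype.ext (by simp)
    rw [← hX]
    exact Subtype.ext (by simp [e])
  let σ : K ≃+* K := IsAlgClosure.equivOfEquiv K K e.toRingEquiv
  have hσ (a : Algebra.adjoin F (Set.range x)) : σ a = e a :=
    IsAlgClosure.equivOfEquiv_algebraMap K K e.toRingEquiv a
  refine ⟨AlgEquiv.ofRingEquiv (f := σ) fun a ↦ ?_, fun i ↦ ?_⟩
  · simpa using hσ (algebraMap F _ a)
  · simpa [he i] using hσ ⟨x i, Algebra.subset_adjoin ⟨i, rfl⟩⟩

theorem exists_algEquiv_apply_eq_of_transcendental [IsAlgClosed K] {α β : K}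
    (hα : Transcendental F α) (hβ : Transcendental F β) : ∃ σ : K ≃ₐ[F] K, σ α = β := by
  classical
  obtain ⟨s, hαs, hs⟩ := exists_isTranscendenceBasis_mem hα
  obtain ⟨t, hβt, ht⟩ := exists_isTranscendenceBasis_mem hβ
  obtain ⟨e⟩ : Nonempty (s ≃ t) := Cardinal.eq.1 (hs.cardinalMk_eq ht)
  let e' : s ≃ t := e.setValue ⟨α, hαs⟩ ⟨β, hβt⟩
  obtain ⟨σ, hσ⟩ := exists_algEquiv_apply_eq_of_isTranscendenceBasis hs
    ((isTranscendenceBasis_equiv e').2 ht)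
  exact ⟨σ, by simpa [e', Equiv.setValue_eq] using hσ ⟨α, hαs⟩⟩

end Automorphisms

section FormalODE

open Polynomial (aeval)
open PowerSeries

variable {k k' : Type*} [CommRing k] [CommRing k']

theorem powerSeries_map_derivative (σ : k →+* k') (Y : k⟦X⟧) :
    (d⁄dX k Y).map σ = d⁄dX k' (Y.map σ) := by
  ext n
  simp [coeff_derivative]

theorem powerSeries_map_aeval (σ : k →+* k') (P : Polynomial k) (Y : k⟦X⟧) :
    (aeval Y P).map σ = aeval (Y.map σ) (P.map σ) :=
  Polynomial.map_aeval_eq_aeval_map (ψ := PowerSeries.map σ)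
    (RingHom.ext fun a ↦ (map_C σ a).symm) P Y

variable [IsDomain k] {R : Polynomial k} {Y Z : k⟦X⟧}

theorem two_mul_derivative_derivative_eq_aeval_derivative (hY : d⁄dX k Y ^ 2 = aeval Y R)
    (hY' : d⁄dX k Y ≠ 0) : 2 * d⁄dX k (d⁄dX k Y) = aeval Y R.derivative := by
  refine mul_right_cancel₀ hY' ?_
  have h := congrArg (d⁄dX k) hY
  rw [Derivation.leibniz_pow, Derivation.map_aeval] at h
  simp only [smul_eq_mul, nsmul_eq_mul] at h
  push_cast at h
  linear_combination h

variable [CharZero k]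

theorem eq_of_two_mul_derivative_derivative_eq_aeval {S : Polynomial k}
    (hY : 2 * d⁄dX k (d⁄dX k Y) = aeval Y S) (hZ : 2 * d⁄dX k (d⁄dX k Z) = aeval Z S)
    (hYZ : X ^ 2 ∣ Y - Z) : Y = Z := by
  have hcoeff (n : ℕ) : coeff n (Y - Z) = 0 := by
    induction n using Nat.strong_induction_on with
    | _ n ih =>
      match n with
      | 0 => exact X_pow_dvd_iff.1 hYZ 0 two_pos
      | 1 => exact X_pow_dvd_iff.1 hYZ 1 one_lt_two
      | n + 2 =>
        have hdvd : X ^ (n + 2) ∣ 2 * d⁄dX k (d⁄dX k (Y - Z)) := by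
          rw [map_sub, map_sub, mul_sub, hY, hZ, ← Polynomial.eval_map_algebraMap,
            ← Polynomial.eval_map_algebraMap]
          exact (X_pow_dvd_iff.2 ih).trans (Polynomial.sub_dvd_eval_sub Y Z _)
        have h := X_pow_dvd_iff.1 hdvd n (by omega)
        rw [two_mul, map_add, coeff_derivative, coeff_derivative] at h
        have hn : (((2 * (n + 2) * (n + 1) : ℕ) : k)) ≠ 0 := Nat.cast_ne_zero.2 (by positivity)
        refine (mul_eq_zero.1 ?_).resolve_left hn
        push_cast at h ⊢
        linear_combination h
  exact sub_eq_zero.1 (PowerSeries.ext hcoeff)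

-- The equation `Y' ^ 2 = R(Y)` is singular where `Y' = 0`; its derivative `2 Y'' = R'(Y)` is not,
-- and it determines `Y` from its first two coefficients.
theorem map_eq_self_of_derivative_sq_eq_aeval (σ : k →+* k) (hR : R.map σ = R)
    (hY : d⁄dX k Y ^ 2 = aeval Y R) (hY₀ : Y ≠ 0) (hY₂ : X ^ 2 ∣ Y) : Y.map σ = Y := by
  have hY' : d⁄dX k Y ≠ 0 := fun h ↦ hY₀ <| derivative.ext (by simpa using h) <| by
    simpa using X_pow_dvd_iff.1 hY₂ 0 two_pos
  have hode := two_mul_derivative_derivative_eq_aeval_derivative hY hY'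
  have hodeσ : 2 * d⁄dX k (d⁄dX k (Y.map σ)) = aeval (Y.map σ) R.derivative := by
    have h := congrArg (PowerSeries.map σ) hode
    rwa [map_mul, map_ofNat, powerSeries_map_derivative, powerSeries_map_derivative,
      powerSeries_map_aeval, ← Polynomial.derivative_map, hR] at h
  refine eq_of_two_mul_derivative_derivative_eq_aeval hodeσ hode (dvd_sub ?_ hY₂)
  simpa using map_dvd (PowerSeries.map σ) hY₂

end FormalODE

section TaylorSeries

open Filter Topology
open Polynomial (aeval)
open PowerSeries

variable {𝕜 : Type*} [NontriviallyNormedField 𝕜]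

/-- The Taylor series of `f` at `0`. -/
noncomputable def taylorSeries (f : 𝕜 → 𝕜) : 𝕜⟦X⟧ :=
  PowerSeries.mk fun n ↦ iteratedDeriv n f 0 / n.factorial

theorem coeff_taylorSeries (f : 𝕜 → 𝕜) (n : ℕ) :
    coeff n (taylorSeries f) = iteratedDeriv n f 0 / n.factorial :=
  coeff_mk _ _

theorem taylorSeries_congr {f g : 𝕜 → 𝕜} (h : f =ᶠ[𝓝 0] g) : taylorSeries f = taylorSeries g := by
  ext n
  rw [coeff_taylorSeries, coeff_taylorSeries, h.iteratedDeriv_eq n]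

theorem taylorSeries_const (c : 𝕜) : taylorSeries (fun _ ↦ c) = C c := by
  ext n
  rw [coeff_taylorSeries, iteratedDeriv_const, coeff_C]
  split_ifs with hn <;> simp [hn]

theorem taylorSeries_comp_mul_left (f : 𝕜 → 𝕜) (c : 𝕜) :
    taylorSeries (fun z ↦ f (c * z)) = rescale c (taylorSeries f) := by
  have h (n : ℕ) :
      iteratedDeriv n (fun z ↦ f (c * z)) = fun z ↦ c ^ n * iteratedDeriv n f (c * z) := by
    induction n with
    | zero => simp
    | succ n ih =>
      ext z
      rw [iteratedDeriv_succ, ih, deriv_const_mul_field,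
        deriv_comp_mul_left (f := iteratedDeriv n f), iteratedDeriv_succ, smul_eq_mul, pow_succ,
        mul_assoc]
  ext n
  simp [coeff_taylorSeries, h, mul_div_assoc]

theorem taylorSeries_deriv [CharZero 𝕜] (f : 𝕜 → 𝕜) :
    taylorSeries (deriv f) = d⁄dX 𝕜 (taylorSeries f) := by
  ext n
  rw [coeff_derivative, coeff_taylorSeries, coeff_taylorSeries, ← iteratedDeriv_succ',
    Nat.factorial_succ]
  have hn : (n + 1 : 𝕜) ≠ 0 := by exact_mod_cast n.succ_ne_zero
  have hn! : (n.factorial : 𝕜) ≠ 0 := by exact_mod_cast n.factorial_ne_zero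
  push_cast
  field_simp

variable [CompleteSpace 𝕜] {f g : 𝕜 → 𝕜}

theorem taylorSeries_add (hf : AnalyticAt 𝕜 f 0) (hg : AnalyticAt 𝕜 g 0) :
    taylorSeries (fun z ↦ f z + g z) = taylorSeries f + taylorSeries g := by
  ext n
  simp [coeff_taylorSeries, iteratedDeriv_fun_add hf.contDiffAt hg.contDiffAt, add_div]

variable [CharZero 𝕜]

theorem taylorSeries_mul (hf : AnalyticAt 𝕜 f 0) (hg : AnalyticAt 𝕜 g 0) :
    taylorSeries (fun z ↦ f z * g z) = taylorSeries f * taylorSeries g := by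
  ext n
  simp only [coeff_mul, coeff_taylorSeries]
  rw [iteratedDeriv_fun_mul hf.contDiffAt hg.contDiffAt,
    ← Finset.Nat.sum_antidiagonal_eq_sum_range_succ
      (fun i j ↦ (n.choose i : 𝕜) * iteratedDeriv i f 0 * iteratedDeriv j g 0), Finset.sum_div]
  refine Finset.sum_congr rfl fun ⟨i, j⟩ hij ↦ ?_
  obtain rfl := Finset.HasAntidiagonal.mem_antidiagonal.1 hij
  have hi : (i.factorial : 𝕜) ≠ 0 := by exact_mod_cast i.factorial_ne_zero
  have hj : (j.factorial : 𝕜) ≠ 0 := by exact_mod_cast j.factorial_ne_zero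
  have hchoose : ((i + j).choose i : 𝕜) * (i.factorial * j.factorial) = (i + j).factorial := by
    rw [Nat.choose_symm_add, ← mul_assoc]
    exact_mod_cast Nat.add_choose_mul_factorial_mul_factorial i j
  have hij! : ((i + j).factorial : 𝕜) ≠ 0 := by exact_mod_cast (i + j).factorial_ne_zero
  simp only
  rw [div_mul_div_comm, div_eq_div_iff hij! (mul_ne_zero hi hj), ← hchoose]
  ring

theorem taylorSeries_eval (hf : AnalyticAt 𝕜 f 0) (P : Polynomial 𝕜) :
    taylorSeries (fun z ↦ P.eval (f z)) = aeval (taylorSeries f) P := by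
  have hP (P : Polynomial 𝕜) : AnalyticAt 𝕜 (fun z ↦ P.eval (f z)) 0 := by
    simpa using hf.aeval_polynomial P
  induction P using Polynomial.induction_on with
  | C a => simp [taylorSeries_const]
  | add P Q ihP ihQ =>
    simp only [Polynomial.eval_add]
    rw [taylorSeries_add (hP P) (hP Q), ihP, ihQ, map_add]
  | monomial n a ih =>
    simp only [pow_succ, ← mul_assoc, Polynomial.eval_mul_X]
    rw [taylorSeries_mul (hP _) hf, ih, map_mul _ (_ * _) Polynomial.X, Polynomial.aeval_X]

theorem X_pow_dvd_taylorSeries_iff (hf : AnalyticAt 𝕜 f 0) (n : ℕ) :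
    X ^ n ∣ taylorSeries f ↔ n ≤ analyticOrderAt f 0 := by
  rw [natCast_le_analyticOrderAt_iff_iteratedDeriv_eq_zero hf, X_pow_dvd_iff]
  simp [coeff_taylorSeries, Nat.factorial_ne_zero]

theorem taylorSeries_eq_zero_iff (hf : AnalyticAt 𝕜 f 0) :
    taylorSeries f = 0 ↔ ∀ᶠ z in 𝓝 0, f z = 0 := by
  rw [← analyticOrderAt_eq_top, ENat.eq_top_iff_forall_ge]
  simp only [← X_pow_dvd_taylorSeries_iff hf]
  refine ⟨fun h n ↦ h ▸ dvd_zero _, fun h ↦ PowerSeries.ext fun n ↦ ?_⟩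
  simpa using X_pow_dvd_iff.1 (h (n + 1)) n n.lt_succ_self

theorem taylorSeries_eq_iff (hf : AnalyticAt 𝕜 f 0) (hg : AnalyticAt 𝕜 g 0) :
    taylorSeries f = taylorSeries g ↔ f =ᶠ[𝓝 0] g := by
  refine ⟨fun h ↦ ?_, taylorSeries_congr⟩
  have hsub : taylorSeries (f - g) = 0 := by
    have := taylorSeries_add (hf.sub hg) hg
    simp only [Pi.sub_apply, sub_add_cancel] at this
    rw [h] at this
    exact right_eq_add.1 this
  exact ((taylorSeries_eq_zero_iff (hf.sub hg)).1 hsub).mono fun z hz ↦ sub_eq_zero.1 hz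

end TaylorSeries

section Meromorphic

open Filter Topology

variable {𝕜 : Type*} [NontriviallyNormedField 𝕜] {f g : 𝕜 → 𝕜} {x : 𝕜}

theorem exists_meromorphicOrderAt_lt_meromorphicOrderAt_sub_const_mul (hf : MeromorphicAt f x)
    (hg : MeromorphicAt g x) (hfg : meromorphicOrderAt f x = meromorphicOrderAt g x)
    (hg_top : meromorphicOrderAt g x ≠ ⊤) :
    ∃ c : 𝕜, meromorphicOrderAt g x < meromorphicOrderAt (fun z ↦ f z - c * g z) x := by
  have hquot : meromorphicOrderAt (f / g) x = 0 := by
    rw [meromorphicOrderAt_div hf hg, hfg,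
      LinearOrderedAddCommGroupWithTop.sub_self_eq_zero_of_ne_top hg_top]
  obtain ⟨c, -, hc⟩ := tendsto_ne_zero_of_meromorphicOrderAt_eq_zero (hf.div hg) hquot
  have hsub : 0 < meromorphicOrderAt (fun z ↦ f z / g z - c) x :=
    (tendsto_zero_iff_meromorphicOrderAt_pos (by fun_prop)).1 (by simpa using hc.sub_const c)
  refine ⟨c, ?_⟩
  have hg0 : ∀ᶠ z in 𝓝[≠] x, g z ≠ 0 :=
    (meromorphicOrderAt_ne_top_iff_eventually_ne_zero hg).1 hg_top
  have heq : (fun z ↦ f z - c * g z) =ᶠ[𝓝[≠] x] fun z ↦ g z * (f z / g z - c) := by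
    filter_upwards [hg0] with z hz
    field_simp
  rw [meromorphicOrderAt_congr heq, fun_meromorphicOrderAt_mul hg (by fun_prop)]
  simpa using WithTop.add_lt_add_left hg_top hsub

theorem even_of_meromorphicOrderAt_zero_eq [CharZero 𝕜] (hf : MeromorphicAt f 0)
    (heven : Function.Even f) {m : ℤ} (hm : meromorphicOrderAt f 0 = m) : Even m := by
  obtain ⟨h, hh, hh0, hfh⟩ := (meromorphicOrderAt_eq_int_iff hf).1 hm
  simp only [sub_zero, smul_eq_mul] at hfh
  by_contra hodd
  rw [Int.not_even_iff_odd] at hodd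
  have hneg : Tendsto (fun z : 𝕜 ↦ -z) (𝓝[≠] 0) (𝓝[≠] 0) := by
    have h := Filter.neg_nhdsNE (a := (0 : 𝕜))
    rw [neg_zero] at h
    exact h.le
  have hanti : (fun z ↦ -h (-z)) =ᶠ[𝓝[≠] 0] h := by
    filter_upwards [hfh, hneg.eventually hfh, self_mem_nhdsWithin] with z hz hz' hz0
    rw [heven, hz, hodd.neg_zpow] at hz'
    refine mul_left_cancel₀ (zpow_ne_zero m hz0) ?_
    linear_combination -hz'
  have hlim : Tendsto h (𝓝[≠] 0) (𝓝 (h 0)) := hh.continuousAt.tendsto.mono_left nhdsWithin_le_nhds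
  have := tendsto_nhds_unique (hlim.congr' hanti.symm) (hlim.comp hneg).neg
  exact hh0 (self_eq_neg.1 this)

theorem natCast_le_meromorphicOrderAt_eval {n : ℕ} {Q : Polynomial 𝕜}
    (hf : AnalyticAt 𝕜 f x) (hQ : (Polynomial.X - Polynomial.C (f x)) ^ n ∣ Q) :
    (n : WithTop ℤ) ≤ meromorphicOrderAt (fun z ↦ Q.eval (f z)) x := by
  obtain ⟨Q₁, rfl⟩ := hQ
  have hQ₁ : AnalyticAt 𝕜 (fun z ↦ Q₁.eval (f z)) x := by simpa using hf.aeval_polynomial Q₁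
  have hsub : AnalyticAt 𝕜 (fun z ↦ f z - f x) x := by fun_prop
  have hsub_order : 1 ≤ analyticOrderAt (fun z ↦ f z - f x) x :=
    Order.one_le_iff_ne_zero.2 (hsub.analyticOrderAt_ne_zero.2 (sub_self _))
  have hle : (n : ℕ∞) ≤ analyticOrderAt ((fun z ↦ f z - f x) ^ n * fun z ↦ Q₁.eval (f z)) x := by
    rw [analyticOrderAt_mul (hsub.pow n) hQ₁, analyticOrderAt_pow hsub]
    calc (n : ℕ∞) = n • 1 := by simp
      _ ≤ n • analyticOrderAt (fun z ↦ f z - f x) x := by gcongr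
      _ ≤ _ := le_self_add
  have heval : (fun z ↦ ((Polynomial.X - Polynomial.C (f x)) ^ n * Q₁).eval (f z)) =
      (fun z ↦ f z - f x) ^ n * fun z ↦ Q₁.eval (f z) := by
    ext z; simp
  rw [heval, ((hsub.pow n).mul hQ₁).meromorphicOrderAt_eq]
  exact ENat.monotone_map_iff.2 Nat.mono_cast hle

theorem eventually_nhdsNE_eval_ne_zero (hf : MeromorphicAt f x)
    (hconst : ¬ EventuallyConst f (𝓝[≠] x)) {Q : Polynomial 𝕜} (hQ : Q ≠ 0) :
    ∀ᶠ z in 𝓝[≠] x, Q.eval (f z) ≠ 0 := by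
  have hroot (a : 𝕜) : ∀ᶠ z in 𝓝[≠] x, f z ≠ a := by
    have hsub : MeromorphicAt (f · - a) x := by fun_prop
    have htop : meromorphicOrderAt (f · - a) x ≠ ⊤ := fun h ↦
      hconst (eventuallyConst_nhdsNE_iff_meromorphicOrderAt_sub_eq_top.2 ⟨a, h⟩)
    filter_upwards [(meromorphicOrderAt_ne_top_iff_eventually_ne_zero hsub).1 htop] with z hz
    exact sub_ne_zero.1 hz
  have hroots : ∀ᶠ z in 𝓝[≠] x, ∀ a ∈ Q.rootSet 𝕜, f z ≠ a :=
    (eventually_all_finite (Q.rootSet_finite 𝕜)).2 fun a _ ↦ hroot a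
  filter_upwards [hroots] with z hz hQz
  exact hz (f z) (by simpa [Polynomial.mem_rootSet, hQ] using hQz) rfl

theorem meromorphic_eval (hf : Meromorphic f) (P : Polynomial 𝕜) :
    Meromorphic fun z ↦ P.eval (f z) := by
  simp only [Polynomial.eval_eq_sum_range]
  fun_prop

theorem tendsto_add_const_nhdsNE (x c : 𝕜) : Tendsto (· + c) (𝓝[≠] x) (𝓝[≠] (x + c)) :=
  (continuous_add_const c).continuousAt.continuousWithinAt.tendsto_nhdsWithin fun z hz ↦ by
    simpa using hz

theorem eventually_add_const_eq_of_mul_eval_eq [PreconnectedSpace 𝕜]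
    (hf : Meromorphic f) (hg : Meromorphic g) {c : 𝕜} (hfc : Function.Periodic f c)
    (hconst : ¬ EventuallyConst f (𝓝[≠] x)) {P Q : Polynomial 𝕜} (hQ : Q ≠ 0)
    (h : ∀ᶠ z in 𝓝[≠] x, g z * Q.eval (f z) = P.eval (f z)) :
    ∀ᶠ z in 𝓝[≠] x, g (z + c) = g z := by
  let F : 𝕜 → 𝕜 := fun z ↦ g z * Q.eval (f z) - P.eval (f z)
  have hF : Meromorphic F := (hg.mul (meromorphic_eval hf Q)).sub (meromorphic_eval hf P)
  have hFx : meromorphicOrderAt F x = ⊤ :=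
    meromorphicOrderAt_eq_top_iff.2 (h.mono fun z hz ↦ sub_eq_zero.2 hz)
  have hFxc : meromorphicOrderAt F (x + c) = ⊤ := by
    by_contra hne
    exact MeromorphicOn.meromorphicOrderAt_ne_top_of_isPreconnected (fun z _ ↦ hF z)
      isPreconnected_univ (Set.mem_univ (x + c)) (Set.mem_univ x) hne hFx
  filter_upwards [h, eventually_nhdsNE_eval_ne_zero (hf x) hconst hQ,
    (tendsto_add_const_nhdsNE x c).eventually (meromorphicOrderAt_eq_top_iff.1 hFxc)]
    with z hz hQz hFz
  simp only [F, hfc z] at hFz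
  exact mul_right_cancel₀ hQz ((sub_eq_zero.1 hFz).trans hz.symm)

end Meromorphic

section Elliptic

open Filter Topology
open scoped PeriodPair

variable {L L' : PeriodPair} {f g : ℂ → ℂ}

theorem exists_meromorphicOrderAt_lt_meromorphicOrderAt_sub_eval_weierstrassP (L : PeriodPair)
    (hf : MeromorphicAt f 0) (heven : f.Even) (hneg : meromorphicOrderAt f 0 < 0) :
    ∃ P : Polynomial ℂ, meromorphicOrderAt f 0 <
      meromorphicOrderAt (fun z ↦ f z - P.eval (℘[L] z)) 0 := by
  obtain ⟨m, hm⟩ := WithTop.ne_top_iff_exists.1 hneg.ne_top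
  have hm_neg : m < 0 := by exact_mod_cast hm ▸ hneg
  obtain ⟨k, rfl⟩ := even_of_meromorphicOrderAt_zero_eq hf heven hm.symm
  obtain ⟨n, rfl⟩ : ∃ n : ℕ, k = -n := ⟨k.natAbs, by omega⟩
  have hpow : meromorphicOrderAt (℘[L] ^ n) 0 = meromorphicOrderAt f 0 := by
    rw [meromorphicOrderAt_pow (L.meromorphic_weierstrassP 0),
      L.order_weierstrassP 0 (zero_mem _), ← hm,
      show -(n : ℤ) + -n = n * -2 by ring, WithTop.coe_mul]
    rfl
  obtain ⟨c, hc⟩ := exists_meromorphicOrderAt_lt_meromorphicOrderAt_sub_const_mul hf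
    ((L.meromorphic_weierstrassP 0).pow n) hpow.symm (hpow ▸ hneg.ne_top)
  refine ⟨Polynomial.C c * Polynomial.X ^ n, ?_⟩
  simpa [hpow] using hc

theorem exists_meromorphicOrderAt_sub_eval_weierstrassP_nonneg (L : PeriodPair)
    (hf : MeromorphicAt f 0) (heven : f.Even) :
    ∃ P : Polynomial ℂ, 0 ≤ meromorphicOrderAt (fun z ↦ f z - P.eval (℘[L] z)) 0 := by
  obtain ⟨n, hn⟩ : ∃ n : ℕ, ((-n : ℤ) : WithTop ℤ) ≤ meromorphicOrderAt f 0 := by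
    induction meromorphicOrderAt f 0 with
    | top => exact ⟨0, le_top⟩
    | coe m => exact ⟨m.natAbs, WithTop.coe_le_coe.2 (by omega)⟩
  induction n generalizing f with
  | zero => exact ⟨0, by simpa using hn⟩
  | succ n ih =>
    rcases le_or_gt 0 (meromorphicOrderAt f 0) with hnonneg | hneg
    · exact ⟨0, by simpa using hnonneg⟩
    obtain ⟨P, hP⟩ :=
      exists_meromorphicOrderAt_lt_meromorphicOrderAt_sub_eval_weierstrassP L hf heven hneg
    obtain ⟨R, hR⟩ := ih (f := fun z ↦ f z - P.eval (℘[L] z))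
      (hf.sub (meromorphic_eval L.meromorphic_weierstrassP P 0))
      (fun z ↦ by simp [heven z]) (by
        have hlt := hn.trans_lt hP
        generalize meromorphicOrderAt (fun z ↦ f z - P.eval (℘[L] z)) 0 = m at hlt ⊢
        induction m with
        | top => exact le_top
        | coe m => norm_cast at hlt ⊢; omega)
    exact ⟨P + R, by simpa [sub_sub] using hR⟩

/-- `f` is an elliptic function for the lattice of `L`. Its values at poles are arbitrary as long
as they are periodic too, so that functions are compared on punctured neighbourhoods. -/
structure IsElliptic (L : PeriodPair) (f : ℂ → ℂ) : Prop where
  meromorphic : Meromorphic f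
  periodic : ∀ l ∈ L.lattice, Function.Periodic f l

theorem isElliptic_weierstrassP (L : PeriodPair) : IsElliptic L ℘[L] where
  meromorphic := L.meromorphic_weierstrassP
  periodic l hl z := L.weierstrassP_add_coe z ⟨l, hl⟩

namespace IsElliptic

theorem sub (hf : IsElliptic L f) (hg : IsElliptic L g) : IsElliptic L (f - g) where
  meromorphic := hf.meromorphic.sub hg.meromorphic
  periodic l hl := (hf.periodic l hl).sub (hg.periodic l hl)

theorem mul (hf : IsElliptic L f) (hg : IsElliptic L g) : IsElliptic L (f * g) where
  meromorphic := hf.meromorphic.mul hg.meromorphic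
  periodic l hl := (hf.periodic l hl).mul (hg.periodic l hl)

theorem polynomial_eval (hf : IsElliptic L f) (P : Polynomial ℂ) :
    IsElliptic L (fun z ↦ P.eval (f z)) where
  meromorphic := meromorphic_eval hf.meromorphic P
  periodic l hl := (hf.periodic l hl).comp (P.eval ·)

theorem comp_mul_left (hf : IsElliptic L' f) {α : ℂ} (hα : ∀ l ∈ L.lattice, α * l ∈ L'.lattice) :
    IsElliptic L (fun z ↦ f (α * z)) where
  meromorphic z := (hf.meromorphic (α * z)).comp_analyticAt (g := (α * ·)) (by fun_prop)
  periodic l hl z := by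
    simp only [mul_add]
    exact hf.periodic _ (hα l hl) _

theorem meromorphicOrderAt_add (hf : IsElliptic L f) {l : ℂ} (hl : l ∈ L.lattice) (z : ℂ) :
    meromorphicOrderAt f (z + l) = meromorphicOrderAt f z := by
  rw [← meromorphicOrderAt_comp_add_const_eq_meromorphicOrderAt]
  exact congrArg (meromorphicOrderAt · z) (funext (hf.periodic l hl))

theorem exists_eventuallyEq_const (hf : IsElliptic L f) (hpole : ∀ z, 0 ≤ meromorphicOrderAt f z)
    (x : ℂ) : ∃ c, f =ᶠ[𝓝[≠] x] fun _ ↦ c := by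
  have hf_univ : MeromorphicOn f Set.univ := fun z _ ↦ hf.meromorphic z
  let F : ℂ → ℂ := toMeromorphicNFOn f Set.univ
  have hFf (z : ℂ) : F =ᶠ[𝓝[≠] z] f :=
    hf_univ.toMeromorphicNFOn_eq_self_on_nhdsNE (Set.mem_univ z)
  have hF : Differentiable ℂ F := fun z ↦ by
    refine AnalyticAt.differentiableAt ?_
    rw [← (meromorphicNFOn_toMeromorphicNFOn f Set.univ
      (Set.mem_univ z)).meromorphicOrderAt_nonneg_iff_analyticAt,
      meromorphicOrderAt_toMeromorphicNFOn hf_univ (Set.mem_univ z)]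
    exact hpole z
  have hF_periodic (z l : ℂ) (hl : l ∈ L.lattice) : F (z + l) = F z := by
    have heq : (fun w ↦ F (w + l)) =ᶠ[𝓝[≠] z] F := by
      filter_upwards [(tendsto_add_const_nhdsNE z l).eventually (hFf (z + l)), hFf z]
        with w hwl hw
      rw [hwl, hw, hf.periodic l hl w]
    have hcont : ContinuousAt (fun w ↦ F (w + l)) z :=
      (hF.continuous.comp (continuous_add_const l)).continuousAt
    exact ((hcont.eventuallyEq_nhds_iff_eventuallyEq_nhdsNE
      hF.continuous.continuousAt).1 heq).self_of_nhds
  have hF_bounded : Bornology.IsBounded (Set.range F) :=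
    (IsZLattice.isCompact_range_of_periodic L.lattice F hF.continuous hF_periodic).isBounded
  refine ⟨F x, ?_⟩
  filter_upwards [hFf x] with z hz
  rw [← hz, hF.apply_eq_apply_of_bounded hF_bounded z x]

theorem exists_eventually_eq_eval_weierstrassP (hf : IsElliptic L f) (heven : f.Even)
    (hpole : ∀ z ∉ L.lattice, 0 ≤ meromorphicOrderAt f z) :
    ∃ P : Polynomial ℂ, ∀ᶠ z in 𝓝[≠] 0, f z = P.eval (℘[L] z) := by
  obtain ⟨P, hP⟩ :=
    exists_meromorphicOrderAt_sub_eval_weierstrassP_nonneg L (hf.meromorphic 0) heven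
  have hPL := (isElliptic_weierstrassP L).polynomial_eval P
  have hsub := hf.sub hPL
  have hnonneg (z : ℂ) : 0 ≤ meromorphicOrderAt (f - fun z ↦ P.eval (℘[L] z)) z := by
    by_cases hz : z ∈ L.lattice
    · rwa [← zero_add z, hsub.meromorphicOrderAt_add hz]
    · have hP_analytic : AnalyticAt ℂ (fun z ↦ P.eval (℘[L] z)) z := by
        simpa using (L.analyticOnNhd_weierstrassP z hz).aeval_polynomial P
      rw [sub_eq_add_neg]
      exact (le_min (hpole z hz) hP_analytic.neg.meromorphicOrderAt_nonneg).trans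
        (_root_.meromorphicOrderAt_add (hf.meromorphic z) hP_analytic.neg.meromorphicAt)
  obtain ⟨c, hc⟩ := hsub.exists_eventuallyEq_const hnonneg 0
  refine ⟨P + Polynomial.C c, ?_⟩
  filter_upwards [hc] with z hz
  rw [Polynomial.eval_add, Polynomial.eval_C, ← hz, Pi.sub_apply, add_sub_cancel]

theorem exists_finset_add_mem_of_meromorphicOrderAt_neg (hf : IsElliptic L f) :
    ∃ S : Finset ℂ, ∀ z, meromorphicOrderAt f z < 0 → ∃ l ∈ L.lattice, z + l ∈ S := by
  let U : Set ℂ := closure (ZSpan.fundamentalDomain L.basis)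
  have hU : IsCompact U := (ZSpan.fundamentalDomain_isBounded L.basis).isCompact_closure
  have hfU : MeromorphicOn f U := fun z _ ↦ hf.meromorphic z
  have hfinite := (MeromorphicOn.divisor f U).finiteSupport hU
  refine ⟨hfinite.toFinset, fun z hz ↦ ?_⟩
  obtain ⟨⟨l, hl⟩, hlz, -⟩ := ZSpan.exist_unique_vadd_mem_fundamentalDomain L.basis z
  rw [← L.lattice_eq_span_range_basis] at hl
  have hzl : z + l ∈ U := subset_closure (by simpa [Submodule.vadd_def, add_comm] using hlz)
  refine ⟨l, hl, ?_⟩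
  rw [Set.Finite.mem_toFinset, Function.mem_support, MeromorphicOn.divisor_apply hfU hzl,
    hf.meromorphicOrderAt_add hl]
  simp [WithTop.untop₀_eq_zero, hz.ne, hz.ne_top]

theorem exists_ne_zero_meromorphicOrderAt_mul_eval_weierstrassP_nonneg (hf : IsElliptic L f) :
    ∃ Q : Polynomial ℂ, Q ≠ 0 ∧ ∀ z ∉ L.lattice,
      0 ≤ meromorphicOrderAt (f * fun z ↦ Q.eval (℘[L] z)) z := by
  obtain ⟨S, hS⟩ := hf.exists_finset_add_mem_of_meromorphicOrderAt_neg
  let n (z : ℂ) : ℕ := (-(meromorphicOrderAt f z).untop₀).toNat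
  let Q : Polynomial ℂ := ∏ c ∈ S, (Polynomial.X - Polynomial.C (℘[L] c)) ^ n c
  have hdvd (z : ℂ) : (Polynomial.X - Polynomial.C (℘[L] z)) ^ n z ∣ Q := by
    rcases le_or_gt 0 (meromorphicOrderAt f z) with hnonneg | hneg
    · have hnz : n z = 0 := by simpa [n] using hnonneg
      simp [hnz]
    · obtain ⟨l, hl, hzl⟩ := hS z hneg
      have hP : ℘[L] (z + l) = ℘[L] z := (isElliptic_weierstrassP L).periodic l hl z
      have hn : n (z + l) = n z := by simp only [n, hf.meromorphicOrderAt_add hl]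
      exact hP ▸ hn ▸ Finset.dvd_prod_of_mem _ hzl
  refine ⟨Q, Finset.prod_ne_zero_iff.2 fun c _ ↦ pow_ne_zero _ (Polynomial.X_sub_C_ne_zero _),
    fun z hz ↦ ?_⟩
  have hQz : MeromorphicAt (fun z ↦ Q.eval (℘[L] z)) z :=
    meromorphic_eval L.meromorphic_weierstrassP Q z
  rw [meromorphicOrderAt_mul (hf.meromorphic z) hQz]
  calc (0 : WithTop ℤ) ≤ meromorphicOrderAt f z + n z := by
        simp only [n]
        induction meromorphicOrderAt f z with
        | top => simp
        | coe m =>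
          rw [WithTop.untop₀_coe]
          exact_mod_cast (by omega : 0 ≤ m + ((-m).toNat : ℤ))
    _ ≤ _ := by
        gcongr
        exact natCast_le_meromorphicOrderAt_eval (L.analyticOnNhd_weierstrassP z hz) (hdvd z)

theorem exists_eventually_mul_eval_weierstrassP_eq (hf : IsElliptic L f) (heven : f.Even) :
    ∃ P Q : Polynomial ℂ, Q ≠ 0 ∧
      ∀ᶠ z in 𝓝[≠] 0, f z * Q.eval (℘[L] z) = P.eval (℘[L] z) := by
  obtain ⟨Q, hQ, hpole⟩ := hf.exists_ne_zero_meromorphicOrderAt_mul_eval_weierstrassP_nonneg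
  have heven_mul : Function.Even (f * fun z ↦ Q.eval (℘[L] z)) := fun z ↦ by simp [heven z]
  have hmul := hf.mul ((isElliptic_weierstrassP L).polynomial_eval Q)
  obtain ⟨P, hP⟩ := hmul.exists_eventually_eq_eval_weierstrassP heven_mul hpole
  exact ⟨P, Q, hQ, hP⟩

end IsElliptic

end Elliptic

section InvWeierstrassP

open Filter Topology
open Polynomial (aeval)
open PowerSeries (rescale)
open scoped PeriodPair

/-- The elliptic function `1 / ℘`. Since `℘[L] 0 = 0` and `0⁻¹ = 0`, it takes the right value at
its double zero `0`, so that it is analytic there and has a Taylor series. -/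
noncomputable def invWeierstrassP (L : PeriodPair) (z : ℂ) : ℂ := (℘[L] z)⁻¹

/-- The quartic `4 X - g₂ X ^ 3 - g₃ X ^ 4`, whose value at `1 / ℘` is the square of the derivative
of `1 / ℘`. -/
noncomputable def invWeierstrassPQuartic (L : PeriodPair) : Polynomial ℂ :=
  4 * Polynomial.X - Polynomial.C L.g₂ * Polynomial.X ^ 3 - Polynomial.C L.g₃ * Polynomial.X ^ 4

variable (L : PeriodPair)

theorem isElliptic_invWeierstrassP : IsElliptic L (invWeierstrassP L) where
  meromorphic := L.meromorphic_weierstrassP.inv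
  periodic l hl := ((isElliptic_weierstrassP L).periodic l hl).comp (·⁻¹)

theorem invWeierstrassP_even : (invWeierstrassP L).Even := fun z ↦ by
  simp [invWeierstrassP]

theorem meromorphicOrderAt_invWeierstrassP_eq_two_iff {z : ℂ} :
    meromorphicOrderAt (invWeierstrassP L) z = 2 ↔ z ∈ L.lattice := by
  unfold invWeierstrassP
  rw [fun_meromorphicOrderAt_inv]
  refine ⟨fun h ↦ ?_, fun hz ↦ by rw [L.order_weierstrassP z hz]; rfl⟩
  by_contra hz
  have hnonneg := (L.analyticOnNhd_weierstrassP z hz).meromorphicOrderAt_nonneg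
  generalize meromorphicOrderAt ℘[L] z = m at h hnonneg
  induction m with
  | top => exact absurd h.symm (WithTop.coe_ne_top (a := (2 : ℤ)))
  | coe m =>
    have hm : -m = 2 := WithTop.coe_injective h
    have hm_nonneg : 0 ≤ m := WithTop.coe_nonneg.1 hnonneg
    omega

theorem meromorphicOrderAt_invWeierstrassP_zero :
    meromorphicOrderAt (invWeierstrassP L) 0 = 2 :=
  (meromorphicOrderAt_invWeierstrassP_eq_two_iff L).2 (zero_mem _)

theorem analyticAt_invWeierstrassP_zero : AnalyticAt ℂ (invWeierstrassP L) 0 :=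
  AnalyticAt.of_meromorphicOrderAt_pos (meromorphicOrderAt_invWeierstrassP_zero L ▸ two_pos)
    (by simp [invWeierstrassP])

theorem analyticOrderAt_invWeierstrassP_zero : analyticOrderAt (invWeierstrassP L) 0 = 2 := by
  have h := meromorphicOrderAt_invWeierstrassP_zero L
  rw [(analyticAt_invWeierstrassP_zero L).meromorphicOrderAt_eq] at h
  generalize analyticOrderAt (invWeierstrassP L) 0 = m at h ⊢
  induction m with
  | top => exact absurd h.symm (WithTop.coe_ne_top (a := (2 : ℤ)))
  | coe n =>
    have hn : (n : ℤ) = 2 := WithTop.coe_injective h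
    exact_mod_cast hn

theorem eventually_weierstrassP_ne_zero : ∀ᶠ z in 𝓝[≠] 0, ℘[L] z ≠ 0 := by
  rw [← meromorphicOrderAt_ne_top_iff_eventually_ne_zero (L.meromorphic_weierstrassP 0),
    L.order_weierstrassP 0 (zero_mem _)]
  exact WithTop.coe_ne_top

theorem eventually_notMem_lattice : ∀ᶠ z in 𝓝[≠] 0, z ∉ L.lattice := by
  filter_upwards [nhdsWithin_le_nhds (L.compl_lattice_sdiff_singleton_mem_nhds 0),
    self_mem_nhdsWithin] with z hz hz0 hzL
  exact hz ⟨hzL, hz0⟩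

theorem eventually_deriv_invWeierstrassP_sq :
    ∀ᶠ z in 𝓝 0, deriv (invWeierstrassP L) z ^ 2 =
      (invWeierstrassPQuartic L).eval (invWeierstrassP L z) := by
  have hu := analyticAt_invWeierstrassP_zero L
  have hcont : ContinuousAt (fun z ↦ (invWeierstrassPQuartic L).eval (invWeierstrassP L z)) 0 :=
    (invWeierstrassPQuartic L).continuous.continuousAt.comp hu.continuousAt
  refine ((hu.deriv.continuousAt.pow 2).eventuallyEq_nhds_iff_eventuallyEq_nhdsNE hcont).1 ?_
  filter_upwards [eventually_weierstrassP_ne_zero L, eventually_notMem_lattice L] with z hz hzL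
  have hderiv : deriv (invWeierstrassP L) z = -℘'[L] z / ℘[L] z ^ 2 := by
    unfold invWeierstrassP
    rw [deriv_fun_inv'' (L.analyticOnNhd_weierstrassP z hzL).differentiableAt hz,
      L.deriv_weierstrassP]
  simp only [Pi.pow_apply, hderiv, div_pow, neg_sq, L.derivWeierstrassP_sq z hzL,
    invWeierstrassPQuartic, invWeierstrassP, Polynomial.eval_sub, Polynomial.eval_mul,
    Polynomial.eval_ofNat, Polynomial.eval_X, Polynomial.eval_C, Polynomial.eval_pow]
  field_simp

theorem map_taylorSeries_invWeierstrassP {σ : ℂ →+* ℂ} (hg₂ : σ L.g₂ = L.g₂)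
    (hg₃ : σ L.g₃ = L.g₃) :
    (taylorSeries (invWeierstrassP L)).map σ = taylorSeries (invWeierstrassP L) := by
  have hu := analyticAt_invWeierstrassP_zero L
  refine map_eq_self_of_derivative_sq_eq_aeval (R := invWeierstrassPQuartic L) σ ?_ ?_ ?_ ?_
  · simp [invWeierstrassPQuartic, hg₂, hg₃]
  · rw [← taylorSeries_deriv, ← taylorSeries_eval hu, sq, ← taylorSeries_mul hu.deriv hu.deriv]
    simp only [← sq]
    exact taylorSeries_congr (eventually_deriv_invWeierstrassP_sq L)
  · rw [Ne, taylorSeries_eq_zero_iff hu, ← analyticOrderAt_eq_top,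
      analyticOrderAt_invWeierstrassP_zero]
    exact ENat.natCast_ne_top 2
  · exact (X_pow_dvd_taylorSeries_iff hu 2).2 (analyticOrderAt_invWeierstrassP_zero L).ge

variable {L} {L' : PeriodPair} {f : ℂ → ℂ} {α : ℂ} {P Q : Polynomial ℂ}

theorem IsElliptic.exists_eventually_mul_eval_invWeierstrassP_eq (hf : IsElliptic L f)
    (heven : f.Even) :
    ∃ P Q : Polynomial ℂ, Q ≠ 0 ∧
      ∀ᶠ z in 𝓝[≠] 0, f z * Q.eval (invWeierstrassP L z) = P.eval (invWeierstrassP L z) := by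
  obtain ⟨P, Q, hQ, hPQ⟩ := hf.exists_eventually_mul_eval_weierstrassP_eq heven
  let N : ℕ := max P.natDegree Q.natDegree
  refine ⟨P.reflect N, Q.reflect N, (Polynomial.reflect_eq_zero_iff).not.2 hQ, ?_⟩
  filter_upwards [hPQ, eventually_weierstrassP_ne_zero L] with z hz hz0
  have hreflect (S : Polynomial ℂ) (hS : S.natDegree ≤ N) :
      (S.reflect N).eval (invWeierstrassP L z) * ℘[L] z ^ N = S.eval (℘[L] z) := by
    have := invertibleOfNonzero hz0
    simpa [invWeierstrassP, Polynomial.eval₂_eq_eval_map] using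
      Polynomial.eval₂_reflect_mul_pow (RingHom.id ℂ) (℘[L] z) N S hS
  refine mul_right_cancel₀ (pow_ne_zero N hz0) ?_
  rw [mul_assoc, hreflect P (le_max_left _ _), hreflect Q (le_max_right _ _), hz]

theorem eventually_mul_eval_invWeierstrassP_eq_iff :
    (∀ᶠ z in 𝓝[≠] 0, invWeierstrassP L' (α * z) * Q.eval (invWeierstrassP L z) =
      P.eval (invWeierstrassP L z)) ↔
    rescale α (taylorSeries (invWeierstrassP L')) * aeval (taylorSeries (invWeierstrassP L)) Q =
      aeval (taylorSeries (invWeierstrassP L)) P := by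
  have hu := analyticAt_invWeierstrassP_zero L
  have heval (S : Polynomial ℂ) : AnalyticAt ℂ (fun z ↦ S.eval (invWeierstrassP L z)) 0 := by
    simpa using hu.aeval_polynomial S
  have hv : AnalyticAt ℂ (fun z ↦ invWeierstrassP L' (α * z)) 0 := by
    refine AnalyticAt.comp_of_eq (g := invWeierstrassP L') (f := (α * ·))
      (analyticAt_invWeierstrassP_zero L') (by fun_prop) (mul_zero α)
  rw [← taylorSeries_comp_mul_left, ← taylorSeries_eval hu, ← taylorSeries_eval hu,
    ← taylorSeries_mul hv (heval Q), taylorSeries_eq_iff (hv.fun_mul (heval Q)) (heval P)]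
  exact (hv.fun_mul (heval Q)).continuousAt.eventuallyEq_nhds_iff_eventuallyEq_nhdsNE
    (heval P).continuousAt

theorem eventually_map_mul_eval_invWeierstrassP_eq {σ : ℂ →+* ℂ}
    (hg₂ : σ L.g₂ = L.g₂) (hg₃ : σ L.g₃ = L.g₃) (hg₂' : σ L'.g₂ = L'.g₂) (hg₃' : σ L'.g₃ = L'.g₃)
    (h : ∀ᶠ z in 𝓝[≠] 0, invWeierstrassP L' (α * z) * Q.eval (invWeierstrassP L z) =
      P.eval (invWeierstrassP L z)) :
    ∀ᶠ z in 𝓝[≠] 0, invWeierstrassP L' (σ α * z) * (Q.map σ).eval (invWeierstrassP L z) =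
      (P.map σ).eval (invWeierstrassP L z) := by
  rw [eventually_mul_eval_invWeierstrassP_eq_iff] at h ⊢
  simpa only [map_mul, powerSeries_map_aeval, ← PowerSeries.rescale_map,
    map_taylorSeries_invWeierstrassP L hg₂ hg₃, map_taylorSeries_invWeierstrassP L' hg₂' hg₃']
    using congrArg (PowerSeries.map σ) h

theorem mul_mem_lattice_of_eventually_mul_eval_invWeierstrassP_eq (hα : α ≠ 0) (hQ : Q ≠ 0)
    (h : ∀ᶠ z in 𝓝[≠] 0, invWeierstrassP L' (α * z) * Q.eval (invWeierstrassP L z) =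
      P.eval (invWeierstrassP L z)) {l : ℂ} (hl : l ∈ L.lattice) : α * l ∈ L'.lattice := by
  let v : ℂ → ℂ := invWeierstrassP L'
  have hu := isElliptic_invWeierstrassP L
  have hv : Meromorphic v := (isElliptic_invWeierstrassP L').meromorphic
  have hvα : Meromorphic fun z ↦ v (α * z) := fun z ↦
    (hv (α * z)).comp_analyticAt (g := (α * ·)) (by fun_prop)
  have hconst : ¬ EventuallyConst (invWeierstrassP L) (𝓝[≠] 0) := by
    rw [eventuallyConst_iff_exists_eventuallyEq]
    rintro ⟨c, hc⟩
    have h2 := meromorphicOrderAt_invWeierstrassP_zero L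
    rw [meromorphicOrderAt_congr hc, meromorphicOrderAt_const] at h2
    split_ifs at h2 <;> simp at h2
  have hperiod : (fun z ↦ v (α * (z + l))) =ᶠ[𝓝[≠] 0] fun z ↦ v (α * z) :=
    eventually_add_const_eq_of_mul_eval_eq hu.meromorphic hvα (hu.periodic l hl) hconst hQ h
  have horder (x : ℂ) : meromorphicOrderAt (fun z ↦ v (α * (z + x))) 0 =
      meromorphicOrderAt v (α * x) := by
    have hderiv : deriv (fun z ↦ α * (z + x)) 0 ≠ 0 := by simpa using hα
    have := meromorphicOrderAt_comp_of_deriv_ne_zero (f := v) (by fun_prop) hderiv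
    simpa [Function.comp_def] using this
  have h0 := horder 0
  rw [← meromorphicOrderAt_invWeierstrassP_eq_two_iff, ← horder, meromorphicOrderAt_congr hperiod]
  simpa [v, meromorphicOrderAt_invWeierstrassP_zero] using h0

theorem eq_zero_of_forall_div_mem_lattice (L : PeriodPair) {x : ℂ}
    (h : ∀ n : ℕ, x / (n + 1) ∈ L.lattice) : x = 0 := by
  have hlim : Tendsto (fun n : ℕ ↦ x / ((n : ℂ) + 1)) atTop (𝓝 0) := by
    simpa [div_eq_mul_inv] using (tendsto_one_div_add_atTop_nhds_zero_nat (𝕜 := ℂ)).const_mul x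
  obtain ⟨n, hn⟩ := (hlim.eventually (L.compl_lattice_sdiff_singleton_mem_nhds 0)).exists
  have hx : x / (n + 1) = 0 := by
    by_contra hne
    exact hn ⟨h n, hne⟩
  exact (div_eq_zero_iff.1 hx).resolve_right n.cast_add_one_ne_zero

theorem isAlgebraic_of_forall_mul_mem_lattice {F : Type*} [Field F] [Algebra F ℂ]
    (hg₂ : IsAlgebraic F L.g₂) (hg₃ : IsAlgebraic F L.g₃)
    (hg₂' : IsAlgebraic F L'.g₂) (hg₃' : IsAlgebraic F L'.g₃)
    (hα : ∀ l ∈ L.lattice, α * l ∈ L'.lattice) : IsAlgebraic F α := by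
  let E := algebraicClosure F ℂ
  suffices halg : IsAlgebraic E α from halg.restrictScalars F
  by_contra htrans
  have hα₀ : α ≠ 0 := by
    rintro rfl
    exact htrans isAlgebraic_zero
  obtain ⟨P, Q, hQ, hPQ⟩ := ((isElliptic_invWeierstrassP L').comp_mul_left
    hα).exists_eventually_mul_eval_invWeierstrassP_eq fun z ↦ by
      rw [mul_neg, invWeierstrassP_even]
  have hdiv (n : ℕ) : α * L.ω₁ / (n + 1) ∈ L'.lattice := by
    have hn : (n + 1 : ℂ) ≠ 0 := n.cast_add_one_ne_zero
    have htrans_div : Transcendental E (α / (n + 1)) := fun hdiv ↦ htrans <| by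
      simpa [hn] using hdiv.mul (isAlgebraic_natCast (n + 1))
    obtain ⟨σ, hσ⟩ := exists_algEquiv_apply_eq_of_transcendental htrans htrans_div
    have hfix {x : ℂ} (hx : IsAlgebraic F x) : σ x = x :=
      σ.commutes ⟨x, mem_algebraicClosure_iff.2 hx⟩
    have hσPQ := eventually_map_mul_eval_invWeierstrassP_eq (σ := (σ : ℂ →+* ℂ)) (hfix hg₂)
      (hfix hg₃) (hfix hg₂') (hfix hg₃') hPQ
    rw [mul_div_right_comm, ← hσ]
    exact mul_mem_lattice_of_eventually_mul_eval_invWeierstrassP_eq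
      (by simpa using hα₀) (Polynomial.map_ne_zero hQ) hσPQ L.ω₁_mem_lattice
  exact mul_ne_zero hα₀ (L.indep.ne_zero 0) (eq_zero_of_forall_div_mem_lattice L' hdiv)

end InvWeierstrassP

section Lattice

theorem exists_periodPair_lattice_toAddSubgroup_eq (Λ : AddSubgroup ℂ) [hdisc : DiscreteTopology Λ]
    (hspan : Submodule.span ℝ (Λ : Set ℂ) = ⊤) :
    ∃ L : PeriodPair, L.lattice.toAddSubgroup = Λ := by
  let S : Submodule ℤ ℂ := AddSubgroup.toIntSubmodule Λ
  have : DiscreteTopology S := hdisc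
  have : IsZLattice ℝ S := ⟨hspan⟩
  have := ZLattice.module_free ℝ S
  have := ZLattice.module_finite ℝ S
  have hrank : Module.finrank ℤ S = 2 := (ZLattice.rank ℝ S).trans Complex.finrank_real_complex
  let b : Module.Basis (Fin 2) ℤ S := Module.finBasisOfFinrankEq ℤ S hrank
  let B := b.ofZLatticeBasis ℝ S
  have hB : ![B 0, B 1] = B := by ext i; fin_cases i <;> rfl
  refine ⟨⟨B 0, B 1, hB ▸ B.linearIndependent⟩, ?_⟩
  have hlattice : Submodule.span ℤ {B 0, B 1} = S := by
    rw [← Matrix.range_cons_cons_empty _ _ ![], hB]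
    exact b.ofZLatticeBasis_span ℝ S
  exact congrArg Submodule.toAddSubgroup hlattice

theorem tsum_inv_pow_lattice_toAddSubgroup (L : PeriodPair) {n : ℕ} (hn : n ≠ 0) :
    ∑' w : {w : ℂ // w ∈ L.lattice.toAddSubgroup ∧ w ≠ 0}, ((w : ℂ) ^ n)⁻¹ = L.G n := by
  let incl (w : {w : ℂ // w ∈ L.lattice.toAddSubgroup ∧ w ≠ 0}) : L.lattice := ⟨w, w.2.1⟩
  have hincl : Function.Injective incl := fun v w h ↦
    Subtype.ext (congrArg (fun l : L.lattice ↦ (l : ℂ)) h)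
  refine hincl.tsum_eq (f := fun l : L.lattice ↦ ((l : ℂ) ^ n)⁻¹) fun l hl ↦ ?_
  refine ⟨⟨l, l.2, fun h0 ↦ hl ?_⟩, rfl⟩
  simp [h0, hn]

theorem g₂_lattice_toAddSubgroup (L : PeriodPair) : g₂ L.lattice.toAddSubgroup = L.g₂ := by
  rw [g₂, PeriodPair.g₂, tsum_inv_pow_lattice_toAddSubgroup L four_ne_zero]

theorem g₃_lattice_toAddSubgroup (L : PeriodPair) : g₃ L.lattice.toAddSubgroup = L.g₃ := by
  rw [g₃, PeriodPair.g₃, tsum_inv_pow_lattice_toAddSubgroup L (by norm_num)]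

variable {F : Type*} [Field F] [Algebra F ℂ]

theorem isAlgebraic_of_forall_mul_mem {Λ Λ' : AddSubgroup ℂ} [DiscreteTopology Λ]
    [DiscreteTopology Λ'] (hspan : Submodule.span ℝ (Λ : Set ℂ) = ⊤)
    (hspan' : Submodule.span ℝ (Λ' : Set ℂ) = ⊤)
    (halg : IsAlgebraic F (g₂ Λ) ∧ IsAlgebraic F (g₃ Λ))
    (halg' : IsAlgebraic F (g₂ Λ') ∧ IsAlgebraic F (g₃ Λ'))
    {α : ℂ} (hα : ∀ w ∈ Λ, α * w ∈ Λ') : IsAlgebraic F α := by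
  obtain ⟨L, rfl⟩ := exists_periodPair_lattice_toAddSubgroup_eq Λ hspan
  obtain ⟨L', rfl⟩ := exists_periodPair_lattice_toAddSubgroup_eq Λ' hspan'
  rw [g₂_lattice_toAddSubgroup, g₃_lattice_toAddSubgroup] at halg halg'
  exact isAlgebraic_of_forall_mul_mem_lattice halg.1 halg.2 halg'.1 halg'.2 hα

theorem stmt_10_general {ι ι' : Type*} [Fintype ι] (Λ : ι → AddSubgroup ℂ) (Λ' : ι' → AddSubgroup ℂ)
    (hdisc : ∀ i, DiscreteTopology (Λ i)) (hdisc' : ∀ j, DiscreteTopology (Λ' j))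
    (hspan : ∀ i, Submodule.span ℝ (Λ i : Set ℂ) = ⊤)
    (hspan' : ∀ j, Submodule.span ℝ (Λ' j : Set ℂ) = ⊤)
    (halg : ∀ i, IsAlgebraic F (g₂ (Λ i)) ∧ IsAlgebraic F (g₃ (Λ i)))
    (halg' : ∀ j, IsAlgebraic F (g₂ (Λ' j)) ∧ IsAlgebraic F (g₃ (Λ' j)))
    (M : Matrix ι' ι ℂ)
    (hmap : ∀ γ : ι → ℂ, (∀ i, γ i ∈ Λ i) → ∀ j, M.mulVec γ j ∈ Λ' j) (j : ι') (i : ι) :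
    IsAlgebraic F (M j i) := by
  classical
  refine isAlgebraic_of_forall_mul_mem (hspan i) (hspan' j) (halg i) (halg' j) fun w hw ↦ ?_
  have hsingle (k : ι) : (Pi.single i w : ι → ℂ) k ∈ Λ k := by
    rcases eq_or_ne k i with rfl | hk
    · rwa [Pi.single_eq_same]
    · rw [Pi.single_eq_of_ne hk]
      exact zero_mem _
  simpa [Matrix.mulVec_single] using hmap _ hsingle j

end Lattice

/-- Let `Λ₁, …, Λ_g` and `Λ'₁, …, Λ'_{g'}` be CM lattices (CM by
`R = τ(𝓞 K)`) with algebraic Eisenstein series.  If a complex `g' × g` matrix `M` maps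
`Λ₁ ⊕ ⋯ ⊕ Λ_g` into `Λ'₁ ⊕ ⋯ ⊕ Λ'_{g'}`, then every entry of `M` is algebraic over `ℚ`. -/
theorem stmt_10
    (K : Type*) [Field K] [NumberField K]
    (hdeg : Module.finrank ℚ K = 2)
    (hcplx : IsEmpty (K →+* ℝ))
    (τ : K →+* ℂ)
    (g g' : ℕ)
    (Λ : Fin g → AddSubgroup ℂ) (Λ' : Fin g' → AddSubgroup ℂ)
    (hdisc : ∀ i, DiscreteTopology (Λ i)) (hdisc' : ∀ j, DiscreteTopology (Λ' j))
    (hspan : ∀ i, Submodule.span ℝ (Λ i : Set ℂ) = ⊤)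
    (hspan' : ∀ j, Submodule.span ℝ (Λ' j : Set ℂ) = ⊤)
    (hCM : ∀ i, {z : ℂ | ∀ w ∈ Λ i, z * w ∈ Λ i} =
      Set.range fun a : 𝓞 K => τ (algebraMap (𝓞 K) K a))
    (hCM' : ∀ j, {z : ℂ | ∀ w ∈ Λ' j, z * w ∈ Λ' j} =
      Set.range fun a : 𝓞 K => τ (algebraMap (𝓞 K) K a))
    (halg : ∀ i, IsAlgebraic ℚ (g₂ (Λ i)) ∧ IsAlgebraic ℚ (g₃ (Λ i)))
    (halg' : ∀ j, IsAlgebraic ℚ (g₂ (Λ' j)) ∧ IsAlgebraic ℚ (g₃ (Λ' j)))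
    (M : Matrix (Fin g') (Fin g) ℂ)
    (hmap : ∀ γ : Fin g → ℂ, (∀ i, γ i ∈ Λ i) → ∀ j, M.mulVec γ j ∈ Λ' j) :
    ∀ j i, IsAlgebraic ℚ (M j i) := by
  exact stmt_10_general Λ Λ' hdisc hdisc' hspan hspan' halg halg' M hmap
end

section
/- Let g be odd and let σ be the nontrivial automorphism of K over ℚ, acting coordinatewise on K^g. Let L be a finitely generated 𝓞_K-submodule of K^g whose K-span is all of K^g. Suppose that L is isomorphic as an 𝓞_K-module to 𝔞·L (the submodule generated by {a·v : a ∈ 𝔞, v ∈ L}) for every nonzero fractional ideal 𝔞 of 𝓞_K, and that σ(L) is isomorphic to L as an 𝓞_K-module. Then L is a free 𝓞_K-module, i.e. L ≅ 𝓞_K^g. -/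
open NumberField

/-!
By Steinitz, a lattice `L` of rank `g` over a Dedekind domain `R` is isomorphic to
`R ^ (g - 1) ⊕ I`, so it is free as soon as the class of `I` is trivial. That class is also the
class of the fractional ideal spanned by the determinants of `g`-tuples of vectors of `L`, and this
ideal transforms simply: multiplying `L` by an ideal `J` multiplies it by `J ^ g`, conjugating `L`
conjugates it, and an isomorphism of lattices extends to `K ^ g` and scales it by its determinant.
Hence `I • L ≅ L` gives `[I] ^ g = 1`, and `s(L) ≅ L` for all `s` in a finite group `G` gives
`[s(I)] = [I]`.

The product `∏ s(I)` is extended from the ring `A` of `G`-invariants: if `I` is the content ideal of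
a polynomial `p`, then by the Gauss lemma the product is the content ideal of `∏ s(p)`, whose
coefficients lie in `A`. When `A` is principal this yields `[I] ^ |G| = 1`, and if `|G|` and `g` are
coprime then `[I] = 1`.
-/

open scoped Pointwise nonZeroDivisors

section Steinitz

variable {R : Type*} [CommRing R]

lemma nonempty_linearEquiv_ker_prod {M N : Type*} [AddCommGroup M] [Module R M]
    [AddCommGroup N] [Module R N] [Module.Projective R N] {f : M →ₗ[R] N}
    (hf : Function.Surjective f) : Nonempty (M ≃ₗ[R] f.ker × N) := by
  obtain ⟨s, hs⟩ := f.exists_rightInverse_of_surjective (LinearMap.range_eq_top.mpr hf)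
  exact ⟨(lequivProdOfRightSplitExact f.ker.injective_subtype f.ker.range_subtype hs).symm⟩

lemma nonempty_linearEquiv_span_singleton_mul [IsDomain R] {a : R} (ha : a ≠ 0) (I : Ideal R) :
    Nonempty (I ≃ₗ[R] (Ideal.span {a} * I : Ideal R)) := by
  have map_eq : Submodule.map (LinearMap.mulLeft R a) I = Ideal.span {a} * I := by
    ext x
    simp [Ideal.mem_span_singleton_mul]
  exact ⟨(Submodule.equivMapOfInjective _ (mul_right_injective₀ ha) I).trans
    (LinearEquiv.ofEq _ _ map_eq)⟩

lemma nonempty_prod_linearEquiv_of_sup_eq_top {I J : Ideal R} (h : I ⊔ J = ⊤) :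
    Nonempty ((I × J) ≃ₗ[R] R × (I * J : Ideal R)) := by
  let addMap : (I × J) →ₗ[R] R := I.subtype.coprod J.subtype
  let antidiag : (I ⊓ J : Ideal R) →ₗ[R] I × J :=
    (Submodule.inclusion inf_le_left).prod (-Submodule.inclusion inf_le_right)
  have addMap_range : addMap.range = ⊤ := by simp [addMap, LinearMap.range_coprod, h]
  have antidiag_injective : Function.Injective antidiag := fun x y hxy ↦
    Submodule.inclusion_injective inf_le_left (congrArg Prod.fst hxy)
  have range_antidiag : antidiag.range = addMap.ker := by
    ext ⟨x, y⟩
    constructor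
    · rintro ⟨z, hz⟩
      simp [← hz, antidiag, addMap]
    · intro hxy
      have hxy : (x : R) = -y := eq_neg_of_add_eq_zero_left hxy
      refine ⟨⟨x, x.2, hxy ▸ J.neg_mem y.2⟩, Prod.ext rfl (Subtype.ext ?_)⟩
      simp [antidiag, hxy]
  obtain ⟨s, hs⟩ := addMap.exists_rightInverse_of_surjective addMap_range
  rw [Ideal.mul_eq_inf_of_isCoprime (Ideal.isCoprime_iff_sup_eq.mpr h)]
  exact ⟨(lequivProdOfRightSplitExact antidiag_injective range_antidiag hs).symm ≪≫ₗ
    .prodComm R _ _⟩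

lemma nonempty_linearEquiv_pi_of_isPrincipal [IsDomain R] {M : Type*} [AddCommGroup M] [Module R M]
    {n : ℕ} {I : Ideal R} (hI : I ≠ ⊥) (hprincipal : I.IsPrincipal) (e : M ≃ₗ[R] (Fin n → R) × I) :
    Nonempty (M ≃ₗ[R] Fin (n + 1) → R) := by
  obtain ⟨a, rfl⟩ := hprincipal
  have ha : a ≠ 0 := by
    rintro rfl
    simp at hI
  exact ⟨e ≪≫ₗ .prodCongr (.refl R _) (LinearEquiv.toSpanNonzeroSingleton R R a ha).symm ≪≫ₗ
    .prodComm R _ _ ≪≫ₗ Fin.consLinearEquiv R fun _ : Fin (n + 1) ↦ R⟩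

variable [IsDedekindDomain R]

lemma projective_of_finite_of_isTorsionFree (M : Type*) [AddCommGroup M] [Module R M]
    [Module.Finite R M] [Module.IsTorsionFree R M] : Module.Projective R M :=
  have : Module.FinitePresentation R M := Module.finitePresentation_of_finite R M
  Module.Flat.projective_of_finitePresentation

lemma exists_sup_eq_top_and_linearEquiv {I J : Ideal R} (hI : I ≠ ⊥) (hJ : J ≠ ⊥) :
    ∃ I' : Ideal R, I' ≠ ⊥ ∧ I' ⊔ J = ⊤ ∧ Nonempty (I ≃ₗ[R] I') := by
  obtain rfl | hJtop := eq_or_ne J ⊤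
  · exact ⟨I, hI, sup_top_eq I, ⟨.refl R I⟩⟩
  -- `C` represents the inverse class of `I`; from `C = C * J + (a)` take `a C⁻¹`.
  obtain ⟨x, hxI, hx⟩ := Submodule.exists_mem_ne_zero_of_ne_bot hI
  obtain ⟨C, hC⟩ : I ∣ Ideal.span {x} := Ideal.dvd_span_singleton.mpr hxI
  have hC0 : C ≠ ⊥ := by
    rintro rfl
    simp [hx] at hC
  obtain ⟨a, ha⟩ := IsDedekindDomain.exists_sup_span_eq (I := C * J) (J := C)
    Ideal.mul_le_left (mul_ne_zero hC0 hJ)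
  have ha0 : a ≠ 0 := by
    rintro rfl
    exact hJtop (mul_left_cancel₀ hC0 (by simpa using ha))
  have haC : a ∈ C := ha ▸ Ideal.mem_sup_right (Ideal.mem_span_singleton_self a)
  obtain ⟨I', hI'⟩ : C ∣ Ideal.span {a} := Ideal.dvd_span_singleton.mpr haC
  refine ⟨I', ?_, mul_left_cancel₀ hC0 ?_, ?_⟩
  · rintro rfl
    simp [ha0] at hI'
  · rw [Ideal.mul_sup, ← hI', sup_comm, ha, Ideal.mul_top]
  · obtain ⟨eI⟩ := nonempty_linearEquiv_span_singleton_mul ha0 I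
    obtain ⟨eI'⟩ := nonempty_linearEquiv_span_singleton_mul hx I'
    have scale_eq : Ideal.span {a} * I = Ideal.span {x} * I' := by rw [hI', hC]; ring
    exact ⟨eI ≪≫ₗ .ofEq _ _ scale_eq ≪≫ₗ eI'.symm⟩

lemma exists_prod_linearEquiv {I J : Ideal R} (hI : I ≠ ⊥) (hJ : J ≠ ⊥) :
    ∃ I' : Ideal R, I' ≠ ⊥ ∧ Nonempty ((I × J) ≃ₗ[R] R × I') := by
  obtain ⟨I₁, hI₁, hsup, ⟨e⟩⟩ := exists_sup_eq_top_and_linearEquiv hI hJ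
  obtain ⟨e'⟩ := nonempty_prod_linearEquiv_of_sup_eq_top hsup
  exact ⟨I₁ * J, mul_ne_zero hI₁ hJ, ⟨e.prodCongr (.refl R J) ≪≫ₗ e'⟩⟩

lemma exists_linearEquiv_prod_ideal (M : Type*) [AddCommGroup M] [Module R M] [Nontrivial M]
    [Module.Finite R M] [Module.IsTorsionFree R M] :
    ∃ (N : Submodule R M) (I : Ideal R), I ≠ ⊥ ∧
      Module.finrank R N + 1 = Module.finrank R M ∧ Nonempty (M ≃ₗ[R] N × I) := by
  have := projective_of_finite_of_isTorsionFree (R := R) M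
  obtain ⟨m, hm⟩ := exists_ne (0 : M)
  obtain ⟨φ, hφ⟩ : ∃ φ : Module.Dual R M, φ m ≠ 0 := by
    simpa using (Module.forall_dual_apply_eq_zero_iff R m).not.mpr hm
  have range_ne_bot : φ.range ≠ ⊥ := fun h ↦ hφ (by simp [LinearMap.range_eq_bot.mp h])
  have finrank_range : Module.finrank R φ.range = 1 := by
    have hle : Module.finrank R φ.range ≤ 1 := by simpa using φ.range.finrank_le
    have hne : Module.finrank R φ.range ≠ 0 := by
      rwa [Ne, Module.finrank_zero_iff, Submodule.subsingleton_iff_eq_bot]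
    omega
  have finrank_add := Submodule.finrank_quotient_add_finrank φ.ker
  rw [φ.quotKerEquivRange.finrank_eq, finrank_range] at finrank_add
  have := projective_of_finite_of_isTorsionFree (R := R) φ.range
  have split := nonempty_linearEquiv_ker_prod φ.surjective_rangeRestrict
  rw [LinearMap.ker_rangeRestrict] at split
  exact ⟨φ.ker, φ.range, range_ne_bot, by omega, split⟩

theorem exists_linearEquiv_pi_prod_ideal {n : ℕ} (M : Type*) [AddCommGroup M] [Module R M]
    [Module.Finite R M] [Module.IsTorsionFree R M] (hM : Module.finrank R M = n + 1) :
    ∃ I : Ideal R, I ≠ ⊥ ∧ Nonempty (M ≃ₗ[R] (Fin n → R) × I) := by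
  induction n generalizing M with
  | zero =>
    have := Module.nontrivial_of_finrank_eq_succ hM
    obtain ⟨N, I, hI, hN, ⟨e⟩⟩ := exists_linearEquiv_prod_ideal (R := R) M
    have : Subsingleton N := Module.finrank_zero_iff.mp (show Module.finrank R N = 0 by omega)
    exact ⟨I, hI, ⟨e ≪≫ₗ .prodCongr 0 (.refl R I)⟩⟩
  | succ n ih =>
    have := Module.nontrivial_of_finrank_eq_succ hM
    obtain ⟨N, I, hI, hN, ⟨e⟩⟩ := exists_linearEquiv_prod_ideal (R := R) M
    obtain ⟨J, hJ, ⟨eN⟩⟩ := ih N (by omega)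
    obtain ⟨I', hI', ⟨eJI⟩⟩ := exists_prod_linearEquiv hJ hI
    refine ⟨I', hI', ⟨e ≪≫ₗ eN.prodCongr (.refl R I) ≪≫ₗ .prodAssoc R _ _ _ ≪≫ₗ
      .prodCongr (.refl R _) eJI ≪≫ₗ (LinearEquiv.prodAssoc R _ _ _).symm ≪≫ₗ
      .prodCongr (.prodComm R _ _ ≪≫ₗ Fin.consLinearEquiv R fun _ : Fin (n + 1) ↦ R)
        (.refl R I')⟩⟩

end Steinitz

lemma multilinearMap_mem_of_mem_span {R ι N : Type*} {M : ι → Type*} [Finite ι] [CommSemiring R]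
    [∀ i, AddCommMonoid (M i)] [∀ i, Module R (M i)] [AddCommMonoid N] [Module R N]
    (f : MultilinearMap R M N) {S : ∀ i, Set (M i)} {P : Submodule R N}
    (hS : ∀ v, (∀ i, v i ∈ S i) → f v ∈ P) {v : ∀ i, M i}
    (hv : ∀ i, v i ∈ Submodule.span R (S i)) : f v ∈ P := by
  classical
  have := Fintype.ofFinite ι
  suffices ∀ (s : Finset ι) (v : ∀ i, M i), (∀ i ∈ s, v i ∈ Submodule.span R (S i)) →
      (∀ i ∉ s, v i ∈ S i) → f v ∈ P from
    this Finset.univ v (fun i _ ↦ hv i) (by simp)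
  intro s
  induction s using Finset.induction_on with
  | empty => exact fun v _ hvS ↦ hS v fun i ↦ hvS i (Finset.notMem_empty i)
  | insert a s ha ih =>
    intro v hspan hvS
    suffices ∀ x ∈ Submodule.span R (S a), f (Function.update v a x) ∈ P by
      simpa using this (v a) (hspan a (Finset.mem_insert_self a s))
    intro x hx
    induction hx using Submodule.span_induction with
    | mem x hx =>
      refine ih _ (fun i hi ↦ ?_) fun i hi ↦ ?_
      · have hia : i ≠ a := ne_of_mem_of_not_mem hi ha
        simpa [hia] using hspan i (Finset.mem_insert_of_mem hi)
      · obtain rfl | hia := eq_or_ne i a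
        · simpa using hx
        · simpa [hia] using hvS i (by simp [hia, hi])
    | zero => simp
    | add x y _ _ hx hy => simpa using P.add_mem hx hy
    | smul r x _ hx => simpa using P.smul_mem r hx

lemma prod_eq_span_set_prod {R A ι : Type*} [CommSemiring R] [CommSemiring A] [Algebra R A]
    (s : Finset ι) (N : ι → Submodule R A) :
    ∏ i ∈ s, N i = Submodule.span R (∏ i ∈ s, (N i : Set A)) := by
  simp_rw [← Submodule.prod_span, Submodule.span_eq]

section LatticeDet

variable {R K ι : Type*} [CommRing R] [CommRing K] [Algebra R K] [Fintype ι] [DecidableEq ι]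

/-- The determinant module of a submodule `L` of `K ^ ι`: the `R`-span in `K` of the determinants of
all matrices with rows in `L`. For a lattice over a Dedekind domain with fraction field `K`, it is a
fractional ideal representing the Steinitz class of `L`. -/
def latticeDet (L : Submodule R (ι → K)) : Submodule R K :=
  Submodule.span R (Matrix.det '' {A : Matrix ι ι K | ∀ i, A i ∈ L})

lemma latticeDet_span (S : Set (ι → K)) :
    latticeDet (Submodule.span R S) =
      Submodule.span R (Matrix.det '' {A : Matrix ι ι K | ∀ i, A i ∈ S}) := by
  refine le_antisymm (Submodule.span_le.mpr ?_)
    (Submodule.span_mono <| Set.image_mono fun A hA i ↦ Submodule.subset_span (hA i))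
  rintro _ ⟨A, hA, rfl⟩
  exact multilinearMap_mem_of_mem_span
    (Matrix.detRowAlternating.toMultilinearMap.restrictScalars R)
    (fun B hB ↦ Submodule.subset_span (Set.mem_image_of_mem _ hB)) hA

lemma latticeDet_smul (I : Ideal R) (L : Submodule R (ι → K)) :
    latticeDet (I • L) =
      IsLocalization.coeSubmodule K I ^ Fintype.card ι * latticeDet L := by
  have coe_pow : IsLocalization.coeSubmodule K I ^ Fintype.card ι =
      Submodule.span R (∏ _i : ι, (IsLocalization.coeSubmodule K I : Set K)) := by
    rw [← prod_eq_span_set_prod, Finset.prod_const, Finset.card_univ]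
  have smul_eq_span : I • L = Submodule.span R ((I : Set R) • (L : Set (ι → K))) := by
    rw [← Submodule.span_smul_span, Ideal.span_eq, Submodule.span_eq]
  rw [coe_pow, smul_eq_span, latticeDet_span, latticeDet, Submodule.span_mul_span]
  have det_smul_rows (a : ι → R) (B : Matrix ι ι K) :
      (Matrix.of fun i ↦ a i • B i).det = (∏ i, algebraMap R K (a i)) * B.det := by
    simp_rw [← Matrix.det_mul_column, ← Algebra.smul_def]
    rfl
  congr 1
  ext d
  simp only [Set.mem_image, Set.mem_mul, Set.mem_fintype_prod, Set.mem_smul]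
  constructor
  · rintro ⟨A, hA, rfl⟩
    choose a ha B hB hAB using hA
    obtain rfl : A = Matrix.of fun i ↦ a i • B i := funext fun i ↦ (hAB i).symm
    exact ⟨_, ⟨_, fun i ↦ ⟨a i, ha i, rfl⟩, rfl⟩, _, ⟨.of B, hB, rfl⟩, (det_smul_rows a B).symm⟩
  · rintro ⟨_, ⟨x, hx, rfl⟩, _, ⟨B, hB, rfl⟩, rfl⟩
    choose a ha hax using hx
    obtain rfl : (fun i ↦ algebraMap R K (a i)) = x := funext hax
    exact ⟨_, fun i ↦ ⟨a i, ha i, B i, hB i, rfl⟩, det_smul_rows a B⟩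

lemma latticeDet_pi (N : ι → Submodule R K) :
    latticeDet (Submodule.pi Set.univ N) = ∏ i, N i := by
  rw [prod_eq_span_set_prod]
  refine le_antisymm (Submodule.span_le.mpr ?_) (Submodule.span_le.mpr ?_)
  · rintro _ ⟨A, hA, rfl⟩
    rw [Matrix.det_apply']
    refine sum_mem fun τ _ ↦ ?_
    rw [← zsmul_eq_mul]
    exact zsmul_mem (Submodule.subset_span <| (Set.mem_fintype_prod _ _).mpr
      ⟨_, fun i ↦ hA (τ i) i trivial, rfl⟩) _
  · intro d hd
    obtain ⟨x, hx, rfl⟩ := (Set.mem_fintype_prod _ _).mp hd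
    refine Submodule.subset_span ⟨Matrix.diagonal x, fun i j _ ↦ ?_, Matrix.det_diagonal⟩
    obtain rfl | hij := eq_or_ne i j
    · simpa using hx i
    · simp [Matrix.diagonal_apply_ne _ hij]

end LatticeDet

section Conjugation

variable {R G : Type*} [CommRing R] [Group G] [MulSemiringAction G R]

lemma span_smul_span_set {M : Type*} [AddCommGroup M] [Module R M] [DistribMulAction G M]
    [SMulDistribClass G R M] (s : G) (S : Set M) :
    Submodule.span R (s • (Submodule.span R S : Set M)) = Submodule.span R (s • S) := by
  refine le_antisymm (Submodule.span_le.mpr ?_)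
    (Submodule.span_mono (Set.smul_set_mono Submodule.subset_span))
  rintro _ ⟨x, hx, rfl⟩
  simp only [SetLike.mem_coe] at hx ⊢
  induction hx using Submodule.span_induction with
  | mem x hx => exact Submodule.subset_span (Set.smul_mem_smul_set hx)
  | zero => simp
  | add x y _ _ hx hy => simpa using add_mem hx hy
  | smul r x _ hx => simpa [smul_distrib_smul] using Submodule.smul_mem _ (s • r) hx

variable {K : Type*} [CommRing K] [Algebra R K] [MulSemiringAction G K] [SMulDistribClass G R K]

lemma span_smul_set_mul (s : G) (M N : Submodule R K) :
    Submodule.span R (s • ((M * N : Submodule R K) : Set K)) =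
      Submodule.span R (s • (M : Set K)) * Submodule.span R (s • (N : Set K)) := by
  rw [Submodule.span_mul_span, ← smul_mul', ← span_smul_span_set s (_ * _),
    ← Submodule.span_mul_span, Submodule.span_eq, Submodule.span_eq]

lemma span_smul_set_coeSubmodule (s : G) (I : Ideal R) :
    Submodule.span R (s • (IsLocalization.coeSubmodule K I : Set K)) =
      IsLocalization.coeSubmodule K (s • I) := by
  rw [Ideal.pointwise_smul_def, Ideal.map, IsLocalization.coeSubmodule_span]
  congr 1
  ext x
  simp [Set.mem_smul_set, IsLocalization.coeSubmodule, algebraMap.smul']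

lemma latticeDet_span_smul_set {ι : Type*} [Fintype ι] [DecidableEq ι] (s : G)
    (L : Submodule R (ι → K)) :
    latticeDet (Submodule.span R (s • (L : Set (ι → K)))) =
      Submodule.span R (s • (latticeDet L : Set K)) := by
  have det_smul (A : Matrix ι ι K) : (s • A).det = s • A.det :=
    (RingHom.map_det (MulSemiringAction.toRingHom G K s) A).symm
  rw [latticeDet_span, latticeDet, span_smul_span_set]
  congr 1
  ext d
  simp only [Set.mem_image, Set.mem_smul_set]
  constructor
  · rintro ⟨A, hA, rfl⟩
    choose B hB hBA using hA
    obtain rfl : A = s • Matrix.of B := funext fun i ↦ (hBA i).symm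
    exact ⟨_, ⟨.of B, hB, rfl⟩, (det_smul _).symm⟩
  · rintro ⟨_, ⟨B, hB, rfl⟩, rfl⟩
    exact ⟨s • B, fun i ↦ ⟨B i, hB i, rfl⟩, det_smul B⟩

end Conjugation

section FullLattice

variable {R K : Type*} [CommRing R] [Field K] [Algebra R K] [IsFractionRing R K]

lemma isLocalizedModule_subtype_of_span_eq_top {V : Type*} [AddCommGroup V] [Module R V]
    [Module K V] [IsScalarTower R K V] {L : Submodule R V}
    (hL : Submodule.span K (L : Set V) = ⊤) : IsLocalizedModule R⁰ L.subtype := by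
  have := isLocalizedModule_id R⁰ V K
  have localized_eq_top : L.localized' K R⁰ (LinearMap.id : V →ₗ[R] V) = ⊤ := by
    simpa [Submodule.localized'_eq_span] using hL
  exact IsLocalizedModule.of_linearEquiv R⁰ (L.toLocalized' K R⁰ LinearMap.id)
    ((LinearEquiv.ofTop _ localized_eq_top).restrictScalars R)

lemma finrank_eq_of_span_eq_top {V : Type*} [AddCommGroup V] [Module R V]
    [Module K V] [IsScalarTower R K V] {L : Submodule R V}
    (hL : Submodule.span K (L : Set V) = ⊤) : Module.finrank R L = Module.finrank K V := by
  have := isLocalizedModule_subtype_of_span_eq_top hL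
  rw [← IsLocalizedModule.finrank_eq R⁰ L.subtype le_rfl, ← IsLocalization.finrank_eq K R⁰ le_rfl]

lemma exists_linearMap_extending {V W : Type*} [AddCommGroup V] [Module R V]
    [Module K V] [IsScalarTower R K V] [AddCommGroup W] [Module R W] [Module K W]
    [IsScalarTower R K W] {L : Submodule R V} (hL : Submodule.span K (L : Set V) = ⊤)
    (f : L →ₗ[R] W) : ∃ F : V →ₗ[K] W, ∀ x : L, F x = f x := by
  have := isLocalizedModule_subtype_of_span_eq_top hL
  have := isLocalizedModule_id R⁰ W K
  have units := IsLocalizedModule.map_units (S := R⁰) (LinearMap.id : W →ₗ[R] W)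
  exact ⟨(IsLocalizedModule.lift R⁰ L.subtype f units).extendScalarsOfIsLocalization R⁰ K,
    IsLocalizedModule.lift_apply R⁰ L.subtype f units⟩

lemma exists_latticeDet_eq_span_singleton_mul {ι : Type*} [Fintype ι] [DecidableEq ι]
    {L L' : Submodule R (ι → K)} (hL : Submodule.span K (L : Set (ι → K)) = ⊤)
    (e : L ≃ₗ[R] L') : ∃ c : K, latticeDet L' = Submodule.span R {c} * latticeDet L := by
  obtain ⟨F, hF⟩ : ∃ F : (ι → K) →ₗ[K] ι → K, ∀ x : L, F x = e x :=
    exists_linearMap_extending hL (L'.subtype ∘ₗ e.toLinearMap)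
  have det_map_rows (v : ι → ι → K) :
      (Matrix.of fun i ↦ F (v i)).det = LinearMap.det F * (Matrix.of v).det := by
    simpa only [Pi.basisFun_det_apply, Function.comp_def] using (Pi.basisFun K ι).det_comp F v
  refine ⟨LinearMap.det F, ?_⟩
  rw [latticeDet, latticeDet, Submodule.span_mul_span]
  congr 1
  ext d
  simp only [Set.singleton_mul, Set.mem_image]
  constructor
  · rintro ⟨A, hA, rfl⟩
    have map_symm (i : ι) : F (e.symm ⟨A i, hA i⟩) = A i := by rw [hF, e.apply_symm_apply]
    exact ⟨_, ⟨.of fun i ↦ e.symm ⟨A i, hA i⟩, fun i ↦ (e.symm ⟨A i, hA i⟩).2, rfl⟩,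
      (det_map_rows _).symm.trans (congrArg Matrix.det (funext map_symm))⟩
  · rintro ⟨_, ⟨A, hA, rfl⟩, rfl⟩
    have map_mem (i : ι) : F (A i) ∈ L' := by
      rw [hF ⟨A i, hA i⟩]
      exact (e _).2
    exact ⟨_, map_mem, det_map_rows A⟩

lemma nonempty_linearEquiv_pi_cons_coeSubmodule (n : ℕ) (I : Ideal R) :
    Nonempty (((Fin n → R) × I) ≃ₗ[R] Submodule.pi Set.univ
      (Fin.cons (IsLocalization.coeSubmodule K I) 1 : Fin (n + 1) → Submodule R K)) := by
  let cons : ((Fin n → R) × I) →ₗ[R] Fin (n + 1) → K :=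
    (Algebra.linearMap R K ∘ₗ I.subtype ∘ₗ LinearMap.snd R (Fin n → R) I).vecCons
      ((Algebra.linearMap R K).compLeft (Fin n) ∘ₗ LinearMap.fst R (Fin n → R) I)
  have cons_injective : Function.Injective cons := by
    rintro ⟨v, x⟩ ⟨w, y⟩ h
    obtain ⟨hxy, hvw⟩ := Matrix.vecCons_inj.mp h
    exact Prod.ext (funext fun i ↦ IsFractionRing.injective R K (congrFun hvw i))
      (Subtype.ext (IsFractionRing.injective R K hxy))
  have range_cons : cons.range = Submodule.pi Set.univ
      (Fin.cons (IsLocalization.coeSubmodule K I) 1 : Fin (n + 1) → Submodule R K) := by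
    ext z
    simp only [Submodule.mem_pi, Set.mem_univ, forall_const, Fin.forall_fin_succ, Fin.cons_zero,
      Fin.cons_succ, Pi.one_apply, Submodule.mem_one, IsLocalization.mem_coeSubmodule]
    constructor
    · rintro ⟨⟨v, x⟩, rfl⟩
      exact ⟨⟨x, x.2, rfl⟩, fun i ↦ ⟨v i, rfl⟩⟩
    · rintro ⟨⟨x, hx, hxz⟩, htail⟩
      choose v hv using htail
      exact ⟨(v, ⟨x, hx⟩), funext (Fin.cases hxz hv)⟩
  exact ⟨(LinearEquiv.ofInjective cons cons_injective).trans (LinearEquiv.ofEq _ _ range_cons)⟩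

lemma exists_coeSubmodule_eq_span_singleton_mul_latticeDet {n : ℕ} {I : Ideal R}
    {L : Submodule R (Fin (n + 1) → K)} (hL : Submodule.span K (L : Set (Fin (n + 1) → K)) = ⊤)
    (e : L ≃ₗ[R] (Fin n → R) × I) :
    ∃ c : K, IsLocalization.coeSubmodule K I = Submodule.span R {c} * latticeDet L := by
  obtain ⟨e'⟩ := nonempty_linearEquiv_pi_cons_coeSubmodule (K := K) n I
  simpa [latticeDet_pi, Fin.prod_univ_succ] using
    exists_latticeDet_eq_span_singleton_mul hL (e ≪≫ₗ e')

end FullLattice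

section Content

open Polynomial

lemma contentIdeal_mul_of_isPrincipalIdealRing {R : Type*} [CommRing R] [IsDomain R]
    [IsPrincipalIdealRing R] (p q : R[X]) :
    (p * q).contentIdeal = p.contentIdeal * q.contentIdeal := by
  let := UniqueFactorizationMonoid.strongNormalizationMonoid (α := R)
  let := UniqueFactorizationMonoid.toStrongNormalizedGCDMonoid R
  have contentIdeal_eq (r : R[X]) : r.contentIdeal = Ideal.span {r.content} :=
    (IsPrincipalIdealRing.principal _).contentIdeal_eq_span_content_of_isPrincipal
  simp_rw [contentIdeal_eq, content_mul, Ideal.span_singleton_mul_span_singleton]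

lemma contentIdeal_mul {R : Type*} [CommRing R] [IsDedekindDomain R] (p q : R[X]) :
    (p * q).contentIdeal = p.contentIdeal * q.contentIdeal := by
  refine Ideal.eq_of_localization_maximal fun P _ ↦ ?_
  simp_rw [Ideal.map_mul, ← contentIdeal_map_eq_map_contentIdeal, Polynomial.map_mul,
    contentIdeal_mul_of_isPrincipalIdealRing]

lemma contentIdeal_prod {R ι : Type*} [CommRing R] [IsDedekindDomain R] (s : Finset ι)
    (p : ι → R[X]) : (∏ i ∈ s, p i).contentIdeal = ∏ i ∈ s, (p i).contentIdeal :=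
  map_prod (⟨⟨contentIdeal, by simp⟩, contentIdeal_mul⟩ : R[X] →* Ideal R) p s

lemma exists_contentIdeal_eq {R : Type*} [Semiring R] {I : Ideal R} (hI : I.FG) :
    ∃ p : R[X], p.contentIdeal = I := by
  classical
  obtain ⟨n, a, rfl⟩ := Submodule.fg_iff_exists_fin_generating_family.mp hI
  refine ⟨ofFn n a, le_antisymm (Ideal.span_le.mpr fun x hx ↦ ?_) (Ideal.span_le.mpr ?_)⟩
  · obtain ⟨i, -, rfl⟩ := mem_coeffs_iff.mp hx
    obtain hi | hi := lt_or_ge i n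
    · rw [ofFn_coeff_eq_val_of_lt a hi]
      exact Submodule.subset_span ⟨_, rfl⟩
    · simp [ofFn_coeff_eq_zero_of_ge a hi]
  · rintro _ ⟨i, rfl⟩
    simpa [ofFn_coeff_eq_val_of_lt a i.2] using coeff_mem_contentIdeal (ofFn n a) i

variable {A R G : Type*} [CommRing A] [CommRing R] [Algebra A R] [Group G]
  [MulSemiringAction G R]

lemma contentIdeal_smul (s : G) (p : R[X]) : (s • p).contentIdeal = s • p.contentIdeal := by
  rw [Ideal.pointwise_smul_def, ← contentIdeal_map_eq_map_contentIdeal, smul_eq_map]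

lemma exists_map_eq_of_forall_smul_eq [Algebra.IsInvariant A R G] {p : R[X]}
    (hp : ∀ s : G, s • p = p) : ∃ q : A[X], q.map (algebraMap A R) = p := by
  refine (mem_lifts p).mp ((lifts_iff_coeff_lifts p).mpr fun n ↦
    Algebra.IsInvariant.isInvariant (G := G) (p.coeff n) fun s ↦ ?_)
  rw [← coeff_smul, hp]

lemma exists_prod_smul_eq_map [Fintype G] [Algebra.IsInvariant A R G] [IsDedekindDomain R]
    (I : Ideal R) : ∃ J : Ideal A, ∏ s : G, s • I = J.map (algebraMap A R) := by
  obtain ⟨p, rfl⟩ := exists_contentIdeal_eq (IsNoetherian.noetherian I)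
  obtain ⟨q, hq⟩ := exists_map_eq_of_forall_smul_eq (A := A) (G := G) (Finset.smul_prod_perm p)
  refine ⟨q.contentIdeal, ?_⟩
  simp_rw [← contentIdeal_smul, ← contentIdeal_prod, ← hq, contentIdeal_map_eq_map_contentIdeal]

end Content

section ClassGroup

lemma pointwise_smul_mem_nonZeroDivisors {R G : Type*} [CommRing R] [IsDomain R] [Group G]
    [MulSemiringAction G R] (s : G) {I : Ideal R} (hI : I ∈ (Ideal R)⁰) : s • I ∈ (Ideal R)⁰ := by
  rw [mem_nonZeroDivisors_iff_ne_zero] at hI ⊢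
  exact fun h ↦ hI ((smul_eq_zero_iff_eq s).mp h)

variable {R : Type*} [CommRing R] [IsDedekindDomain R]

lemma mk0_eq_mk0_of_span_singleton_mul_coeSubmodule_eq {K : Type*} [Field K] [Algebra R K]
    [IsFractionRing R K] {I J : (Ideal R)⁰} {c d : K} (hc : c ≠ 0)
    (h : Submodule.span R {c} * IsLocalization.coeSubmodule K (I : Ideal R) =
      Submodule.span R {d} * IsLocalization.coeSubmodule K (J : Ideal R)) :
    ClassGroup.mk0 I = ClassGroup.mk0 J := by
  have fractional_eq : FractionalIdeal.spanSingleton R⁰ c * ((I : Ideal R) : FractionalIdeal R⁰ K) =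
      FractionalIdeal.spanSingleton R⁰ d * ((J : Ideal R) : FractionalIdeal R⁰ K) :=
    FractionalIdeal.coeToSubmodule_injective (by simpa using h)
  have hd : d ≠ 0 := by
    rintro rfl
    have hI : (I : Ideal R) ≠ ⊥ := nonZeroDivisors.ne_zero I.2
    simp [FractionalIdeal.spanSingleton_eq_zero_iff, hc, hI] at fractional_eq
  refine (ClassGroup.mk0_eq_mk0_iff_exists_fraction_ring K).mpr
    ⟨d⁻¹ * c, mul_ne_zero (inv_ne_zero hd) hc, ?_⟩
  rw [← FractionalIdeal.spanSingleton_mul_spanSingleton, mul_assoc, fractional_eq, ← mul_assoc,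
    FractionalIdeal.spanSingleton_mul_spanSingleton, inv_mul_cancel₀ hd,
    FractionalIdeal.spanSingleton_one, one_mul]

lemma mk0_pow_card_eq_one_of_forall_smul (A : Type*) {G : Type*} [CommRing A]
    [IsPrincipalIdealRing A] [Algebra A R] [Group G] [Finite G] [MulSemiringAction G R]
    [Algebra.IsInvariant A R G] {I : (Ideal R)⁰}
    (hI : ∀ s : G, ClassGroup.mk0 ⟨s • (I : Ideal R), pointwise_smul_mem_nonZeroDivisors s I.2⟩ =
      ClassGroup.mk0 I) :
    ClassGroup.mk0 I ^ Nat.card G = 1 := by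
  have := Fintype.ofFinite G
  let N : (Ideal R)⁰ := ∏ s : G, ⟨s • (I : Ideal R), pointwise_smul_mem_nonZeroDivisors s I.2⟩
  have mk0_norm : ClassGroup.mk0 N = ClassGroup.mk0 I ^ Nat.card G := by
    simp [N, map_prod, hI]
  obtain ⟨J, hJ⟩ : ∃ J : Ideal A, (N : Ideal R) = J.map (algebraMap A R) := by
    simpa [N] using exists_prod_smul_eq_map (A := A) (G := G) (I : Ideal R)
  rw [← mk0_norm]
  refine (ClassGroup.mk0_eq_one_iff N.2).mpr ?_
  rw [hJ]
  infer_instance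

end ClassGroup

section SteinitzClass

lemma coeSubmodule_pow {R S : Type*} [CommSemiring R] [CommSemiring S] [Algebra R S] (I : Ideal R)
    (n : ℕ) : IsLocalization.coeSubmodule S (I ^ n) = IsLocalization.coeSubmodule S I ^ n :=
  Submodule.map_pow I (Algebra.ofId R S) n

variable {R K : Type*} [CommRing R] [IsDedekindDomain R] [Field K] [Algebra R K]
  [IsFractionRing R K]

lemma mk0_pow_card_eq_one_of_linearEquiv_smul {ι : Type*} [Fintype ι] [DecidableEq ι]
    {L : Submodule R (ι → K)} (hL : Submodule.span K (L : Set (ι → K)) = ⊤) {I J : (Ideal R)⁰}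
    {c : K} (hI : IsLocalization.coeSubmodule K (I : Ideal R) = Submodule.span R {c} * latticeDet L)
    (e : L ≃ₗ[R] ((J : Ideal R) • L : Submodule R (ι → K))) :
    ClassGroup.mk0 J ^ Fintype.card ι = 1 := by
  obtain ⟨d, hd⟩ := exists_latticeDet_eq_span_singleton_mul hL e
  rw [latticeDet_smul] at hd
  have mk0_eq : ClassGroup.mk0 (J ^ Fintype.card ι * I) = ClassGroup.mk0 I := by
    refine mk0_eq_mk0_of_span_singleton_mul_coeSubmodule_eq (one_ne_zero (α := K)) (d := d) ?_
    rw [← Submodule.one_eq_span, one_mul, Submonoid.coe_mul, SubmonoidClass.coe_pow,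
      IsLocalization.coeSubmodule_mul, coeSubmodule_pow, hI, mul_left_comm, hd, mul_left_comm]
  simpa using mk0_eq

lemma mk0_smul_eq_of_linearEquiv_conj {ι G : Type*} [Fintype ι] [DecidableEq ι] [Group G]
    [MulSemiringAction G R] [MulSemiringAction G K] [SMulDistribClass G R K]
    {L : Submodule R (ι → K)} (hL : Submodule.span K (L : Set (ι → K)) = ⊤) {I : (Ideal R)⁰}
    {c : K} (hI : IsLocalization.coeSubmodule K (I : Ideal R) = Submodule.span R {c} * latticeDet L)
    {s : G} (e : Submodule.span R (s • (L : Set (ι → K))) ≃ₗ[R] L) :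
    ClassGroup.mk0 ⟨s • (I : Ideal R), pointwise_smul_mem_nonZeroDivisors s I.2⟩ =
      ClassGroup.mk0 I := by
  obtain ⟨d, hd⟩ := exists_latticeDet_eq_span_singleton_mul hL e.symm
  rw [latticeDet_span_smul_set] at hd
  have hc : c ≠ 0 := by
    rintro rfl
    have coe_eq_bot : IsLocalization.coeSubmodule K (I : Ideal R) = ⊥ := by simpa using hI
    exact nonZeroDivisors.ne_zero I.2
      (IsFractionRing.coeSubmodule_injective R K (by simpa using coe_eq_bot))
  refine mk0_eq_mk0_of_span_singleton_mul_coeSubmodule_eq hc (d := s • c * d) ?_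
  calc Submodule.span R {c} * IsLocalization.coeSubmodule K (s • (I : Ideal R))
      = Submodule.span R {c} * (Submodule.span R {s • c} *
          (Submodule.span R {d} * latticeDet L)) := by
        rw [← span_smul_set_coeSubmodule, hI, span_smul_set_mul, span_smul_span_set,
          Set.smul_set_singleton, hd]
    _ = Submodule.span R {s • c * d} * IsLocalization.coeSubmodule K (I : Ideal R) := by
        rw [hI, ← Set.singleton_mul_singleton, ← Submodule.span_mul_span]
        ring

end SteinitzClass

theorem stmt_14_general {A R K G : Type*} [CommRing A] [IsPrincipalIdealRing A] [CommRing R]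
    [IsDedekindDomain R] [Algebra A R] [Field K] [Algebra R K] [IsFractionRing R K] [Group G]
    [Finite G] [MulSemiringAction G R] [Algebra.IsInvariant A R G] [MulSemiringAction G K]
    [SMulDistribClass G R K] {g : ℕ} (hg : (Nat.card G).Coprime g) {L : Submodule R (Fin g → K)}
    (hfg : L.FG) (hspan : Submodule.span K (L : Set (Fin g → K)) = ⊤)
    (hiso : ∀ I : Ideal R, I ≠ ⊥ → Nonempty (L ≃ₗ[R] (I • L : Submodule R (Fin g → K))))
    (hconj : ∀ s : G, Nonempty (Submodule.span R (s • (L : Set (Fin g → K))) ≃ₗ[R] L)) :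
    Nonempty (L ≃ₗ[R] Fin g → R) := by
  have : Module.Finite R L := Module.Finite.iff_fg.mpr hfg
  have finrank_eq : Module.finrank R L = g := by simpa using finrank_eq_of_span_eq_top hspan
  obtain _ | n := g
  · have : Subsingleton L := Module.finrank_zero_iff.mp finrank_eq
    exact ⟨0⟩
  obtain ⟨I, hI, ⟨e⟩⟩ := exists_linearEquiv_pi_prod_ideal L finrank_eq
  lift I to (Ideal R)⁰ using mem_nonZeroDivisors_of_ne_zero hI
  obtain ⟨c, hc⟩ := exists_coeSubmodule_eq_span_singleton_mul_latticeDet hspan e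
  have pow_rank : ClassGroup.mk0 I ^ (n + 1) = 1 := by
    obtain ⟨e'⟩ := hiso I hI
    simpa using mk0_pow_card_eq_one_of_linearEquiv_smul hspan hc e'
  have pow_card : ClassGroup.mk0 I ^ Nat.card G = 1 :=
    mk0_pow_card_eq_one_of_forall_smul A fun s ↦
      (hconj s).elim fun e' ↦ mk0_smul_eq_of_linearEquiv_conj hspan hc e'
  have mk0_eq_one : ClassGroup.mk0 I = 1 := by
    simpa [hg.gcd_eq_one] using pow_gcd_eq_one.mpr ⟨pow_card, pow_rank⟩
  exact nonempty_linearEquiv_pi_of_isPrincipal hI ((ClassGroup.mk0_eq_one_iff I.2).mp mk0_eq_one) e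

lemma natCard_gal_eq_two {F E : Type*} [Field F] [Field E] [Algebra F E]
    (h : Module.finrank F E = 2) {σ : Gal(E/F)} (hσ : σ ≠ 1) : Nat.card Gal(E/F) = 2 := by
  have : FiniteDimensional F E := Module.finite_of_finrank_eq_succ h
  have : Nontrivial Gal(E/F) := ⟨σ, 1, hσ⟩
  refine le_antisymm ?_ Finite.one_lt_card
  exact h ▸ Nat.card_eq_fintype_card.trans_le AlgEquiv.card_le

lemma eq_one_or_eq_of_natCard_eq_two {G : Type*} [Group G] (h : Nat.card G = 2) {s : G}
    (hs : s ≠ 1) (t : G) : t = 1 ∨ t = s := by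
  obtain ⟨r, -, hr⟩ := (Nat.card_eq_two_iff' (1 : G)).mp h
  exact or_iff_not_imp_left.mpr fun ht ↦ (hr t ht).trans (hr s hs).symm

lemma span_coeIdeal_smul_eq_ideal_smul {R K V : Type*} [CommRing R] [CommRing K] [Algebra R K]
    [AddCommGroup V] [Module R V] [Module K V] [IsScalarTower R K V] {S : Submonoid R}
    (I : Ideal R) (L : Submodule R V) :
    Submodule.span R {x : V | ∃ a ∈ (I : FractionalIdeal S K), ∃ v ∈ L, x = a • v} = I • L := by
  refine le_antisymm (Submodule.span_le.mpr ?_) (Submodule.smul_le.mpr fun a ha v hv ↦ ?_)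
  · rintro _ ⟨a, ha, v, hv, rfl⟩
    obtain ⟨r, hr, rfl⟩ := (FractionalIdeal.mem_coeIdeal S).mp ha
    rw [algebraMap_smul]
    exact Submodule.smul_mem_smul hr hv
  · exact Submodule.subset_span
      ⟨algebraMap R K a, FractionalIdeal.mem_coeIdeal_of_mem S ha, v, hv,
        (algebraMap_smul K a v).symm⟩

/-- Let `K` be an imaginary quadratic field, `g` odd, `σ` the nontrivial
automorphism of `K/ℚ`, and `L` a finitely generated `𝓞 K`-submodule of `K^g` with full
`K`-span.  If `L ≅ 𝔞·L` for every nonzero fractional ideal `𝔞` and `σ(L) ≅ L` as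
`𝓞 K`-modules, then `L` is free: `L ≅ 𝓞 K ^ g`. -/
theorem stmt_14
    (K : Type*) [Field K] [NumberField K]
    (hdeg : Module.finrank ℚ K = 2)
    (hcplx : IsEmpty (K →+* ℝ))
    (σ : K ≃ₐ[ℚ] K) (hσ : σ ≠ AlgEquiv.refl)
    (g : ℕ) (hgodd : Odd g)
    (L : Submodule (𝓞 K) (Fin g → K))
    (hfg : L.FG)
    (hspan : Submodule.span K (L : Set (Fin g → K)) = ⊤)
    (hiso : ∀ 𝔞 : FractionalIdeal (nonZeroDivisors (𝓞 K)) K, 𝔞 ≠ 0 →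
      Nonempty (L ≃ₗ[𝓞 K]
        (Submodule.span (𝓞 K) {x : Fin g → K | ∃ a ∈ 𝔞, ∃ v ∈ L, x = a • v})))
    (hconj : Nonempty
      ((Submodule.span (𝓞 K) {v : Fin g → K | ∃ w ∈ L, v = fun i => σ (w i)}) ≃ₗ[𝓞 K] L)) :
    Nonempty (L ≃ₗ[𝓞 K] (Fin g → 𝓞 K)) := by
  have card_gal : Nat.card Gal(K/ℚ) = 2 := natCard_gal_eq_two hdeg hσ
  have : IsGalois ℚ K := IsGalois.of_card_aut_eq_finrank ℚ K (card_gal.trans hdeg.symm)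
  have conj_eq : {v : Fin g → K | ∃ w ∈ L, v = fun i ↦ σ (w i)} = σ • (L : Set (Fin g → K)) :=
    Set.ext fun v ↦ exists_congr fun w ↦ and_congr_right fun _ ↦ eq_comm
  refine stmt_14_general (A := ℤ) (G := Gal(K/ℚ)) ?_ hfg hspan (fun I hI ↦ ?_) fun τ ↦ ?_
  · rwa [card_gal, Nat.coprime_two_left]
  · rw [← span_coeIdeal_smul_eq_ideal_smul (K := K) (S := (𝓞 K)⁰) I L]
    exact hiso I (FractionalIdeal.coeIdeal_ne_zero.mpr hI)
  · obtain rfl | rfl := eq_one_or_eq_of_natCard_eq_two card_gal hσ τ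
    · rw [one_smul, Submodule.span_eq]
      exact ⟨.refl _ _⟩
    · rwa [← conj_eq]
end
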